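/- arXiv:1811.06714 — 3 statements merged into one kernel-verified Lean document; each statement's English description precedes it below -/
import Mathlib

section
/- Fix r > 0 and ε > 0. There exists a constant C_{r,ε} > 0 (depending also on d, W and the constants C_{ℓ,N} of the potential) such that for every solution ψ of the Schrödinger equation — i.e. every continuous map ψ : ℝ → h^r such that for each j ∈ ℤ^d the function t ↦ ψ_j(t) is differentiable and satisfies i ψ_j'(t) = μ_j ψ_j(t) + Σ_{k∈ℤ^d} V̂(t, j−k) ψ_k(t) for all t ∈ ℝ — one has ‖ψ(t)‖_r ≤ C_{r,ε} (1+|t|)^ε ‖ψ(0)‖_r for all t ∈ ℝ. -/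
/-- Squared Euclidean norm of an integer vector. -/
noncomputable def znormSq {d : ℕ} (j : Fin d → ℤ) : ℝ :=
  ∑ i, ((j i : ℝ)) ^ 2

/-- Eigenvalues of the Laplacian on the flat torus: μ_j = ‖W j‖². -/
noncomputable def mu {d : ℕ} (W : Matrix (Fin d) (Fin d) ℝ) (j : Fin d → ℤ) : ℝ :=
  ∑ i, (W.mulVec (fun a => ((j a : ℝ))) i) ^ 2

/-- Sobolev norm ‖ψ‖_r = ( Σ_j (1+|j|²)^r |ψ_j|² )^{1/2} on the Fourier side. -/
noncomputable def sobNorm {d : ℕ} (r : ℝ) (ψ : (Fin d → ℤ) → ℂ) : ℝ :=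
  Real.sqrt (∑' j : Fin d → ℤ, (1 + znormSq j) ^ r * ‖ψ j‖ ^ 2)

namespace SobolevGrowth

/-! ### Rapidly decaying matrices -/

section Summability

/-- The summable weight `(1 + ‖k‖)^(-2d)` on `ℤ^d`. -/
noncomputable def latticeWeight {d : ℕ} (k : Fin d → ℤ) : ℝ := ((1 + ‖k‖) ^ (2 * d))⁻¹

lemma latticeWeight_nonneg {d : ℕ} (k : Fin d → ℤ) : 0 ≤ latticeWeight k := by
  unfold latticeWeight; positivity

lemma latticeWeight_neg {d : ℕ} (k : Fin d → ℤ) : latticeWeight (-k) = latticeWeight k := by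
  simp [latticeWeight]

lemma summable_int_inv_sq : Summable fun n : ℤ => (((1 : ℝ) + |(n : ℝ)|) ^ 2)⁻¹ := by
  have h : Summable fun n : ℕ => (((1 : ℝ) + n) ^ 2)⁻¹ := by
    have := (summable_nat_add_iff 1).2 (Real.summable_nat_pow_inv (p := 2).2 (by norm_num))
    refine this.congr fun n => ?_
    push_cast; ring_nf
  refine Summable.of_nat_of_neg ?_ ?_ <;> simpa using h

lemma summable_latticeWeight (d : ℕ) : Summable (latticeWeight (d := d)) := by
  classical
  refine summable_of_sum_le (c := (∑' n : ℤ, (((1 : ℝ) + |(n : ℝ)|) ^ 2)⁻¹) ^ d)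
    latticeWeight_nonneg fun s => ?_
  set f : ℤ → ℝ := fun n => (((1 : ℝ) + |(n : ℝ)|) ^ 2)⁻¹ with hf
  have hf0 : ∀ n, 0 ≤ f n := fun n => by simp only [hf]; positivity
  have hle : ∀ k : Fin d → ℤ, latticeWeight k ≤ ∏ i, f (k i) := by
    intro k
    simp only [hf, latticeWeight, Finset.prod_inv_distrib, pow_mul]
    refine inv_anti₀ (Finset.prod_pos fun i _ => by positivity) ?_
    calc ∏ i, ((1 : ℝ) + |(k i : ℝ)|) ^ 2 ≤ ∏ _i : Fin d, ((1 : ℝ) + ‖k‖) ^ 2 := by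
          refine Finset.prod_le_prod (fun i _ => by positivity) fun i _ => ?_
          have := norm_le_pi_norm k i
          rw [Int.norm_eq_abs] at this
          gcongr
      _ = _ := by simp [← pow_mul]
  set t : Fin d → Finset ℤ := fun i => s.image (fun k => k i)
  calc ∑ k ∈ s, latticeWeight k ≤ ∑ k ∈ s, ∏ i, f (k i) := Finset.sum_le_sum fun k _ => hle k
    _ ≤ ∑ k ∈ Fintype.piFinset t, ∏ i, f (k i) := by
        refine Finset.sum_le_sum_of_subset_of_nonneg (fun k hk => ?_)
          fun k _ _ => Finset.prod_nonneg fun i _ => hf0 _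
        exact Fintype.mem_piFinset.2 fun i => Finset.mem_image_of_mem _ hk
    _ = ∏ i, ∑ n ∈ t i, f n := (Finset.prod_univ_sum t fun _ n => f n).symm
    _ ≤ ∏ _i : Fin d, ∑' n, f n := by
        refine Finset.prod_le_prod (fun i _ => Finset.sum_nonneg fun n _ => hf0 n) fun i _ => ?_
        exact summable_int_inv_sq.sum_le_tsum _ fun n _ => hf0 n
    _ = _ := by simp

lemma one_add_norm_sub_le {d : ℕ} (j m k : Fin d → ℤ) :
    1 + ‖j - k‖ ≤ (1 + ‖j - m‖) * (1 + ‖m - k‖) := by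
  have := norm_sub_le_norm_sub_add_norm_sub j m k
  nlinarith [norm_nonneg (j - m), norm_nonneg (m - k)]

end Summability

/-- The range of the large parameter `Γ`. -/
abbrev Param : Type := {x : ℝ // 1 ≤ x}

lemma param_one_le (p : Param) : (1 : ℝ) ≤ p := p.2

lemma param_pos (p : Param) : (0 : ℝ) < p := zero_lt_one.trans_le p.2

/-- Infinite matrices depending on time and on the parameter `Γ`. -/
abbrev MatFamily (d : ℕ) := Param → ℝ → (Fin d → ℤ) → (Fin d → ℤ) → ℂ

variable {d : ℕ}

/-- The entries of `A` are `O(Γ^(-a))` and decay rapidly off the diagonal. -/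
def RapidDecay (a : ℕ) (A : MatFamily d) : Prop :=
  ∀ N : ℕ, ∃ C : ℝ, 0 ≤ C ∧ ∀ p t j k,
    ‖A p t j k‖ ≤ C * ((p : ℝ) ^ a)⁻¹ * ((1 + ‖j - k‖) ^ N)⁻¹

lemma RapidDecay.add {a : ℕ} {A B : MatFamily d} (hA : RapidDecay a A) (hB : RapidDecay a B) :
    RapidDecay a (A + B) := by
  intro N
  obtain ⟨C, hC, h⟩ := hA N
  obtain ⟨C', hC', h'⟩ := hB N
  refine ⟨C + C', by positivity, fun p t j k => ?_⟩
  calc ‖(A + B) p t j k‖ ≤ ‖A p t j k‖ + ‖B p t j k‖ := norm_add_le _ _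
    _ ≤ _ := add_le_add (h p t j k) (h' p t j k)
    _ = _ := by ring

/-- Entrywise multiplication of a matrix by a time-independent multiplier. -/
def schurMul (m : Param → (Fin d → ℤ) → (Fin d → ℤ) → ℂ) (A : MatFamily d) : MatFamily d :=
  fun p t j k => m p j k * A p t j k

/-- A multiplier of size `O(Γ^(-c))` with polynomial off-diagonal growth. -/
def IsMultiplier (c : ℕ) (m : Param → (Fin d → ℤ) → (Fin d → ℤ) → ℂ) : Prop :=
  ∃ C : ℝ, 0 ≤ C ∧ ∃ q : ℕ, ∀ p j k,
    ‖m p j k‖ ≤ C * ((p : ℝ) ^ c)⁻¹ * (1 + ‖j - k‖) ^ q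

lemma RapidDecay.schurMul {a c : ℕ} {A : MatFamily d}
    {m : Param → (Fin d → ℤ) → (Fin d → ℤ) → ℂ} (hm : IsMultiplier c m) (hA : RapidDecay a A) :
    RapidDecay (a + c) (schurMul m A) := by
  intro N
  obtain ⟨C', hC', q, h'⟩ := hm
  obtain ⟨C, hC, h⟩ := hA (N + q)
  refine ⟨C' * C, by positivity, fun p t j k => ?_⟩
  have hp := param_pos p
  have hj : 0 < 1 + ‖j - k‖ := by positivity
  calc ‖m p j k * A p t j k‖ = ‖m p j k‖ * ‖A p t j k‖ := norm_mul _ _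
    _ ≤ (C' * ((p : ℝ) ^ c)⁻¹ * (1 + ‖j - k‖) ^ q)
        * (C * ((p : ℝ) ^ a)⁻¹ * ((1 + ‖j - k‖) ^ (N + q))⁻¹) := by
        gcongr
        · exact h' p j k
        · exact h p t j k
    _ = _ := by
        rw [pow_add, pow_add]
        field_simp

/-- Product of matrix families. -/
noncomputable def matMul (A B : MatFamily d) : MatFamily d :=
  fun p t j k => ∑' m, A p t j m * B p t m k

lemma RapidDecay.norm_mul_le {a b : ℕ} {A B : MatFamily d} (hA : RapidDecay a A)
    (hB : RapidDecay b B) (N : ℕ) : ∃ C : ℝ, 0 ≤ C ∧ ∀ p t j m k,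
      ‖A p t j m * B p t m k‖ ≤
        C * ((p : ℝ) ^ (a + b))⁻¹ * ((1 + ‖j - k‖) ^ N)⁻¹ * latticeWeight (j - m) := by
  obtain ⟨C, hC, h⟩ := hA (N + 2 * d)
  obtain ⟨C', hC', h'⟩ := hB N
  refine ⟨C * C', by positivity, fun p t j m k => ?_⟩
  have hp := param_pos p
  have h1 : 0 < 1 + ‖j - k‖ := by positivity
  have h2 : 0 < 1 + ‖j - m‖ := by positivity
  have h3 : 0 < 1 + ‖m - k‖ := by positivity
  have key : ((1 + ‖j - m‖) ^ N)⁻¹ * ((1 + ‖m - k‖) ^ N)⁻¹ ≤ ((1 + ‖j - k‖) ^ N)⁻¹ := by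
    rw [← mul_inv, ← mul_pow]
    exact inv_anti₀ (by positivity) (pow_le_pow_left₀ h1.le (one_add_norm_sub_le j m k) N)
  calc ‖A p t j m * B p t m k‖ = ‖A p t j m‖ * ‖B p t m k‖ := norm_mul _ _
    _ ≤ (C * ((p : ℝ) ^ a)⁻¹ * ((1 + ‖j - m‖) ^ (N + 2 * d))⁻¹)
        * (C' * ((p : ℝ) ^ b)⁻¹ * ((1 + ‖m - k‖) ^ N)⁻¹) := by
        gcongr
        · exact h p t j m
        · exact h' p t m k
    _ = C * C' * ((p : ℝ) ^ (a + b))⁻¹ * (((1 + ‖j - m‖) ^ N)⁻¹ * ((1 + ‖m - k‖) ^ N)⁻¹)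
        * latticeWeight (j - m) := by
        rw [latticeWeight, pow_add, pow_add, mul_inv, mul_inv]; ring
    _ ≤ _ := by
        have := latticeWeight_nonneg (j - m)
        gcongr

lemma summable_latticeWeight_sub (j : Fin d → ℤ) :
    Summable fun m => latticeWeight (j - m) :=
  (Equiv.subLeft j).summable_iff.2 (summable_latticeWeight d)

lemma tsum_latticeWeight_sub (j : Fin d → ℤ) :
    ∑' m, latticeWeight (j - m) = ∑' m : Fin d → ℤ, latticeWeight m :=
  (Equiv.subLeft j).tsum_eq latticeWeight

lemma RapidDecay.summable_mul {a b : ℕ} {A B : MatFamily d} (hA : RapidDecay a A)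
    (hB : RapidDecay b B) (p : Param) (t : ℝ) (j k : Fin d → ℤ) :
    Summable fun m => A p t j m * B p t m k := by
  obtain ⟨C, -, h⟩ := hA.norm_mul_le hB 0
  exact Summable.of_norm_bounded ((summable_latticeWeight_sub j).mul_left _) fun m => h p t j m k

lemma RapidDecay.matMul {a b : ℕ} {A B : MatFamily d} (hA : RapidDecay a A)
    (hB : RapidDecay b B) : RapidDecay (a + b) (matMul A B) := by
  intro N
  obtain ⟨C, hC, h⟩ := hA.norm_mul_le hB N
  have hw : 0 ≤ ∑' m : Fin d → ℤ, latticeWeight m := tsum_nonneg latticeWeight_nonneg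
  refine ⟨C * ∑' m : Fin d → ℤ, latticeWeight m, by positivity, fun p t j k => ?_⟩
  have hs := (summable_latticeWeight_sub j).mul_left
    (C * ((p : ℝ) ^ (a + b))⁻¹ * ((1 + ‖j - k‖) ^ N)⁻¹)
  refine (tsum_of_norm_bounded hs.hasSum fun m => h p t j m k).trans (le_of_eq ?_)
  rw [tsum_mul_left, tsum_latticeWeight_sub]
  ring

lemma RapidDecay.mono {a b : ℕ} {A : MatFamily d} (hab : b ≤ a) (hA : RapidDecay a A) :
    RapidDecay b A := by
  intro N
  obtain ⟨C, hC, h⟩ := hA N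
  refine ⟨C, hC, fun p t j k => (h p t j k).trans ?_⟩
  have hp := param_pos p
  gcongr
  exact param_one_le p

/-- `A` is `O(Γ^(-a))`, with rapid off-diagonal decay, together with `l` time derivatives. -/
def SymbolClass (a : ℕ) : ℕ → MatFamily d → Prop
  | 0, A => RapidDecay a A
  | l + 1, A => RapidDecay a A ∧ ∃ A' : MatFamily d,
      (∀ p j k t, HasDerivAt (fun s => A p s j k) (A' p t j k) t) ∧ SymbolClass a l A'

lemma SymbolClass.rapidDecay {a l : ℕ} {A : MatFamily d} (h : SymbolClass a l A) :
    RapidDecay a A := by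
  cases l with
  | zero => exact h
  | succ l => exact h.1

lemma SymbolClass.of_succ {a l : ℕ} {A : MatFamily d} (h : SymbolClass a (l + 1) A) :
    SymbolClass a l A := by
  induction l generalizing A with
  | zero => exact h.1
  | succ l ih =>
    obtain ⟨h0, A', hA', h1⟩ := h
    exact ⟨h0, A', hA', ih h1⟩

lemma SymbolClass.mono {a b l : ℕ} {A : MatFamily d} (hab : b ≤ a) (h : SymbolClass a l A) :
    SymbolClass b l A := by
  induction l generalizing A with
  | zero => exact RapidDecay.mono hab h
  | succ l ih =>
    obtain ⟨h0, A', hA', h1⟩ := h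
    exact ⟨h0.mono hab, A', hA', ih h1⟩

lemma SymbolClass.add {a l : ℕ} {A B : MatFamily d} (hA : SymbolClass a l A)
    (hB : SymbolClass a l B) : SymbolClass a l (A + B) := by
  induction l generalizing A B with
  | zero => exact RapidDecay.add hA hB
  | succ l ih =>
    obtain ⟨h0, A', hA', h1⟩ := hA
    obtain ⟨h0', B', hB', h1'⟩ := hB
    exact ⟨h0.add h0', A' + B', fun p j k t => (hA' p j k t).add (hB' p j k t), ih h1 h1'⟩

lemma SymbolClass.schurMul {a c l : ℕ} {A : MatFamily d}
    {m : Param → (Fin d → ℤ) → (Fin d → ℤ) → ℂ} (hm : IsMultiplier c m)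
    (hA : SymbolClass a l A) : SymbolClass (a + c) l (schurMul m A) := by
  induction l generalizing A with
  | zero => exact RapidDecay.schurMul hm hA
  | succ l ih =>
    obtain ⟨h0, A', hA', h1⟩ := hA
    exact ⟨h0.schurMul hm, SobolevGrowth.schurMul m A',
      fun p j k t => (hA' p j k t).const_mul _, ih h1⟩

lemma SymbolClass.hasDerivAt_matMul {a b : ℕ} {A B A' B' : MatFamily d} (hA : RapidDecay a A)
    (hB : RapidDecay b B) (hA' : RapidDecay a A') (hB' : RapidDecay b B')
    (dA : ∀ p j k t, HasDerivAt (fun s => A p s j k) (A' p t j k) t)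
    (dB : ∀ p j k t, HasDerivAt (fun s => B p s j k) (B' p t j k) t)
    (p : Param) (j k : Fin d → ℤ) (t : ℝ) :
    HasDerivAt (fun s => matMul A B p s j k) ((matMul A' B + matMul A B') p t j k) t := by
  obtain ⟨C, hC, h⟩ := hA'.norm_mul_le hB 0
  obtain ⟨C', hC', h'⟩ := hA.norm_mul_le hB' 0
  have hs := (summable_latticeWeight_sub j).mul_left
    (C * ((p : ℝ) ^ (a + b))⁻¹ * ((1 + ‖j - k‖) ^ 0)⁻¹)
  have hs' := (summable_latticeWeight_sub j).mul_left
    (C' * ((p : ℝ) ^ (a + b))⁻¹ * ((1 + ‖j - k‖) ^ 0)⁻¹)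
  have := hasDerivAt_tsum (hs.add hs') (fun m s => (dA p j m s).mul (dB p m k s))
    (fun m s => (norm_add_le _ _).trans (add_le_add (h p s j m k) (h' p s j m k)))
    (hA.summable_mul hB p t j k) t
  convert! this using 1
  exact ((hA'.summable_mul hB p t j k).tsum_add (hA.summable_mul hB' p t j k)).symm

lemma SymbolClass.matMul {a b l : ℕ} {A B : MatFamily d} (hA : SymbolClass a l A)
    (hB : SymbolClass b l B) : SymbolClass (a + b) l (matMul A B) := by
  induction l generalizing A B with
  | zero => exact RapidDecay.matMul hA hB
  | succ l ih =>
    refine ⟨hA.rapidDecay.matMul hB.rapidDecay, ?_⟩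
    have hA₁ := hA.of_succ
    have hB₁ := hB.of_succ
    obtain ⟨h0, A', hA', h1⟩ := hA
    obtain ⟨h0', B', hB', h1'⟩ := hB
    exact ⟨_, hasDerivAt_matMul h0 h0' h1.rapidDecay h1'.rapidDecay hA' hB',
      (ih h1 hB₁).add (ih hA₁ h1')⟩

/-! ### The ring of symbols -/

lemma isMultiplier_neg_one : IsMultiplier 0 fun _ (_ _ : Fin d → ℤ) => (-1 : ℂ) :=
  ⟨1, zero_le_one, 0, fun _ _ _ => by simp⟩

lemma SymbolClass.neg {a l : ℕ} {A : MatFamily d} (hA : SymbolClass a l A) :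
    SymbolClass a l (-A) := by
  have := hA.schurMul isMultiplier_neg_one
  rwa [show SobolevGrowth.schurMul (fun _ _ _ => (-1 : ℂ)) A = -A from by
    funext p t j k; simp [SobolevGrowth.schurMul]] at this

lemma RapidDecay.zero (a : ℕ) : RapidDecay a (0 : MatFamily d) :=
  fun _ => ⟨0, le_rfl, fun _ _ _ _ => by simp⟩

lemma SymbolClass.zero (a l : ℕ) : SymbolClass a l (0 : MatFamily d) := by
  induction l with
  | zero => exact RapidDecay.zero a
  | succ l ih => exact ⟨RapidDecay.zero a, 0, fun _ _ _ t => hasDerivAt_const t _, ih⟩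

/-- The additive group of families all of whose time derivatives decay rapidly and are
`O(Γ^(-a))`. -/
def symbols (d a : ℕ) : AddSubgroup (MatFamily d) where
  carrier := {A | ∀ l, SymbolClass a l A}
  zero_mem' := SymbolClass.zero a
  add_mem' hA hB l := (hA l).add (hB l)
  neg_mem' hA l := (hA l).neg

/-- The matrix families with rapid off-diagonal decay, as a ring. -/
def SymbolRing (d : ℕ) : Type := symbols d 0

namespace SymbolRing

instance : AddCommGroup (SymbolRing d) := inferInstanceAs (AddCommGroup (symbols d 0))

/-- The entries of a symbol. -/
def entry (A : SymbolRing d) : MatFamily d := A.1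

@[ext] lemma ext {A B : SymbolRing d} (h : ∀ p t j k, A.entry p t j k = B.entry p t j k) :
    A = B :=
  Subtype.ext (by funext p t j k; exact h p t j k)

lemma symbolClass (A : SymbolRing d) (l : ℕ) : SymbolClass 0 l A.entry := A.2 l

lemma rapidDecay (A : SymbolRing d) : RapidDecay 0 A.entry := A.2 0

@[simp] lemma entry_add (A B : SymbolRing d) (p : Param) (t : ℝ) (j k : Fin d → ℤ) :
    (A + B).entry p t j k = A.entry p t j k + B.entry p t j k := rfl

@[simp] lemma entry_neg (A : SymbolRing d) (p : Param) (t : ℝ) (j k : Fin d → ℤ) :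
    (-A).entry p t j k = -A.entry p t j k := rfl

@[simp] lemma entry_sub (A B : SymbolRing d) (p : Param) (t : ℝ) (j k : Fin d → ℤ) :
    (A - B).entry p t j k = A.entry p t j k - B.entry p t j k := rfl

@[simp] lemma entry_zero (p : Param) (t : ℝ) (j k : Fin d → ℤ) :
    (0 : SymbolRing d).entry p t j k = 0 := rfl

/-- The identity matrix. -/
def idMat (d : ℕ) : MatFamily d := fun _ _ j k => if j = k then 1 else 0

lemma rapidDecay_idMat : RapidDecay 0 (idMat d) := by
  refine fun N => ⟨1, zero_le_one, fun p t j k => ?_⟩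
  by_cases h : j = k
  · simp [idMat, h]
  · simp only [idMat, h, if_false, norm_zero]
    positivity

lemma symbolClass_idMat (l : ℕ) : SymbolClass 0 l (idMat d) := by
  cases l with
  | zero => exact rapidDecay_idMat
  | succ l =>
    exact ⟨rapidDecay_idMat, 0, fun _ _ _ t => hasDerivAt_const t _, SymbolClass.zero 0 l⟩

instance : One (SymbolRing d) := ⟨⟨idMat d, symbolClass_idMat⟩⟩

noncomputable instance : Mul (SymbolRing d) :=
  ⟨fun A B => ⟨matMul A.entry B.entry, fun l => (A.symbolClass l).matMul (B.symbolClass l)⟩⟩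

lemma entry_one (p : Param) (t : ℝ) (j k : Fin d → ℤ) :
    (1 : SymbolRing d).entry p t j k = if j = k then 1 else 0 := rfl

lemma entry_mul (A B : SymbolRing d) (p : Param) (t : ℝ) (j k : Fin d → ℤ) :
    (A * B).entry p t j k = ∑' m, A.entry p t j m * B.entry p t m k := rfl

lemma summable_mul (A B : SymbolRing d) (p : Param) (t : ℝ) (j k : Fin d → ℤ) :
    Summable fun m => A.entry p t j m * B.entry p t m k :=
  A.rapidDecay.summable_mul B.rapidDecay p t j k

lemma exists_entry_le_latticeWeight (A : SymbolRing d) :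
    ∃ C : ℝ, 0 ≤ C ∧ ∀ p t j k, ‖A.entry p t j k‖ ≤ C * latticeWeight (j - k) := by
  obtain ⟨C, hC, h⟩ := A.rapidDecay (2 * d)
  exact ⟨C, hC, fun p t j k => by simpa [latticeWeight] using h p t j k⟩

lemma exists_entry_le (A : SymbolRing d) :
    ∃ C : ℝ, 0 ≤ C ∧ ∀ p t j k, ‖A.entry p t j k‖ ≤ C := by
  obtain ⟨C, hC, h⟩ := A.rapidDecay 0
  exact ⟨C, hC, fun p t j k => by simpa using h p t j k⟩

lemma summable_mul_mul (A B C : SymbolRing d) (p : Param) (t : ℝ) (j k : Fin d → ℤ) :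
    Summable fun x : (Fin d → ℤ) × (Fin d → ℤ) =>
      A.entry p t j x.1 * B.entry p t x.1 x.2 * C.entry p t x.2 k := by
  obtain ⟨a, ha, hA⟩ := A.exists_entry_le_latticeWeight
  obtain ⟨b, hb, hB⟩ := B.exists_entry_le
  obtain ⟨c, hc, hC⟩ := C.exists_entry_le_latticeWeight
  have h1 := (summable_latticeWeight_sub j).mul_left a
  have h2 : Summable fun m => c * latticeWeight (m - k) :=
    ((Equiv.subRight k).summable_iff.2 (summable_latticeWeight d)).mul_left c
  have h3 := (h1.mul_of_nonneg h2 (fun m => mul_nonneg ha (latticeWeight_nonneg _))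
    (fun m => mul_nonneg hc (latticeWeight_nonneg _))).mul_left b
  refine Summable.of_norm_bounded h3 fun x => ?_
  rw [norm_mul, norm_mul]
  have := mul_nonneg ha (latticeWeight_nonneg (j - x.1))
  calc ‖A.entry p t j x.1‖ * ‖B.entry p t x.1 x.2‖ * ‖C.entry p t x.2 k‖
      ≤ (a * latticeWeight (j - x.1)) * b * (c * latticeWeight (x.2 - k)) := by
        gcongr
        · exact hA ..
        · exact hB ..
        · exact hC ..
    _ = _ := by ring

noncomputable instance : Ring (SymbolRing d) :=
  { (inferInstance : AddCommGroup (SymbolRing d)) with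
    mul := (· * ·)
    one := 1
    mul_assoc := fun A B C => by
      ext p t j k
      have h := A.summable_mul_mul B C p t j k
      simp only [entry_mul, ← tsum_mul_left, ← tsum_mul_right, ← mul_assoc]
      exact (h.tsum_comm' (fun m => h.prod_factor m) fun n => by
        exact ((A.summable_mul B p t j n).mul_right (C.entry p t n k)))
    left_distrib := fun A B C => by
      ext p t j k
      simp only [entry_mul, entry_add, mul_add]
      exact (A.summable_mul B p t j k).tsum_add (A.summable_mul C p t j k)
    right_distrib := fun A B C => by
      ext p t j k
      simp only [entry_mul, entry_add, add_mul]
      exact (A.summable_mul C p t j k).tsum_add (B.summable_mul C p t j k)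
    one_mul := fun A => by
      ext p t j k
      rw [entry_mul, tsum_eq_single j fun m hm => by simp [entry_one, hm.symm]]
      simp [entry_one]
    mul_one := fun A => by
      ext p t j k
      rw [entry_mul, tsum_eq_single k fun m hm => by simp [entry_one, hm]]
      simp [entry_one]
    zero_mul := fun A => by ext p t j k; simp [entry_mul]
    mul_zero := fun A => by ext p t j k; simp [entry_mul] }

/-- The symbols of size `O(Γ^(-a))`. -/
def order (d a : ℕ) : AddSubgroup (SymbolRing d) where
  carrier := {A | ∀ l, SymbolClass a l A.entry}
  zero_mem' := SymbolClass.zero a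
  add_mem' hA hB l := (hA l).add (hB l)
  neg_mem' hA l := (hA l).neg

lemma mem_order_zero (A : SymbolRing d) : A ∈ order d 0 := A.symbolClass

lemma order_mono {a b : ℕ} (h : b ≤ a) {A : SymbolRing d} (hA : A ∈ order d a) :
    A ∈ order d b := fun l => (hA l).mono h

lemma mul_mem_order {a b : ℕ} {A B : SymbolRing d} (hA : A ∈ order d a) (hB : B ∈ order d b) :
    A * B ∈ order d (a + b) := fun l => (hA l).matMul (hB l)

lemma mul_mem_order_left {a : ℕ} {A : SymbolRing d} (hA : A ∈ order d a) (B : SymbolRing d) :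
    A * B ∈ order d a := mul_mem_order hA B.mem_order_zero

lemma mul_mem_order_right {a : ℕ} {A : SymbolRing d} (hA : A ∈ order d a) (B : SymbolRing d) :
    B * A ∈ order d a := by simpa using mul_mem_order B.mem_order_zero hA

lemma pow_mem_order {A : SymbolRing d} (hA : A ∈ order d 1) (n : ℕ) : A ^ n ∈ order d n := by
  induction n with
  | zero => exact mem_order_zero _
  | succ n ih => rw [pow_succ]; exact mul_mem_order ih hA

lemma exists_norm_entry_le {a : ℕ} {A : SymbolRing d} (hA : A ∈ order d a) :
    ∃ C : ℝ, 0 ≤ C ∧ ∀ p t j k,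
      ‖A.entry p t j k‖ ≤ C * ((p : ℝ) ^ a)⁻¹ * latticeWeight (j - k) :=
  (hA 0) (2 * d)

lemma exists_derivative {a : ℕ} {A : SymbolRing d} (hA : A ∈ order d a) (l : ℕ) :
    SymbolClass a l (fun p t j k => Complex.I * deriv (fun s => A.entry p s j k) t) ∧
      ∀ p j k t, HasDerivAt (fun s => A.entry p s j k)
        (deriv (fun s => A.entry p s j k) t) t := by
  obtain ⟨-, A', hA', h⟩ := hA (l + 1)
  have he : A' = fun p t j k => deriv (fun s => A.entry p s j k) t := by
    funext p t j k; exact (hA' p j k t).deriv.symm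
  subst he
  have hc : IsMultiplier 0 fun _ (_ _ : Fin d → ℤ) => Complex.I :=
    ⟨1, zero_le_one, 0, fun _ _ _ => by simp⟩
  exact ⟨h.schurMul hc, hA'⟩

/-- The derivation `i ∂_t`. -/
noncomputable def iDt : SymbolRing d →+ SymbolRing d where
  toFun A := ⟨_, fun l => (exists_derivative A.mem_order_zero l).1⟩
  map_zero' := by
    refine ext fun p t j k => ?_
    change Complex.I * deriv (fun _ => (0 : ℂ)) t = 0
    simp
  map_add' A B := by
    refine ext fun p t j k => ?_
    have h := ((exists_derivative A.mem_order_zero 0).2 p j k t).add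
      ((exists_derivative B.mem_order_zero 0).2 p j k t)
    exact (congrArg (Complex.I * ·) h.deriv).trans (mul_add _ _ _)

lemma hasDerivAt_entry (A : SymbolRing d) (p : Param) (j k : Fin d → ℤ) (t : ℝ) :
    HasDerivAt (fun s => A.entry p s j k) (-Complex.I * (iDt A).entry p t j k) t := by
  convert! (exists_derivative A.mem_order_zero 0).2 p j k t using 1
  change -Complex.I * (Complex.I * _) = _
  rw [← mul_assoc]; simp

lemma iDt_entry_eq {A : SymbolRing d} {p : Param} {j k : Fin d → ℤ} {t : ℝ} {x : ℂ}
    (h : HasDerivAt (fun s => A.entry p s j k) (-Complex.I * x) t) :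
    (iDt A).entry p t j k = x :=
  mul_left_cancel₀ (neg_ne_zero.2 Complex.I_ne_zero) ((A.hasDerivAt_entry p j k t).unique h)

lemma iDt_mem_order {a : ℕ} {A : SymbolRing d} (hA : A ∈ order d a) : iDt A ∈ order d a :=
  fun l => (exists_derivative hA l).1

lemma iDt_mul (A B : SymbolRing d) : iDt (A * B) = iDt A * B + A * iDt B := by
  ext p t j k
  refine iDt_entry_eq ?_
  have hc : IsMultiplier 0 fun _ (_ _ : Fin d → ℤ) => -Complex.I :=
    ⟨1, zero_le_one, 0, fun _ _ _ => by simp⟩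
  have := SymbolClass.hasDerivAt_matMul A.rapidDecay B.rapidDecay
    ((iDt A).rapidDecay.schurMul hc) ((iDt B).rapidDecay.schurMul hc)
    A.hasDerivAt_entry B.hasDerivAt_entry p j k t
  convert! this using 1
  simp only [entry_add, entry_mul, Pi.add_apply, matMul, schurMul, mul_add, ← tsum_mul_left]
  congr 1 <;> exact tsum_congr fun m => by ring

/-- Entrywise multiplication by a multiplier, as an additive map on symbols. -/
def schur (m : Param → (Fin d → ℤ) → (Fin d → ℤ) → ℂ) (hm : IsMultiplier 0 m) :
    SymbolRing d →+ SymbolRing d where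
  toFun A := ⟨schurMul m A.entry, fun l => (A.symbolClass l).schurMul hm⟩
  map_zero' := by ext p t j k; exact mul_zero _
  map_add' A B := by ext p t j k; exact mul_add _ _ _

lemma entry_schur {m : Param → (Fin d → ℤ) → (Fin d → ℤ) → ℂ} (hm : IsMultiplier 0 m)
    (A : SymbolRing d) (p : Param) (t : ℝ) (j k : Fin d → ℤ) :
    (schur m hm A).entry p t j k = m p j k * A.entry p t j k := rfl

lemma schur_mem_order {m : Param → (Fin d → ℤ) → (Fin d → ℤ) → ℂ} (hm : IsMultiplier 0 m)
    {a c : ℕ} (hmc : IsMultiplier c m) {A : SymbolRing d} (hA : A ∈ order d a) :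
    schur m hm A ∈ order d (a + c) := fun l => (hA l).schurMul hmc

lemma iDt_schur {m : Param → (Fin d → ℤ) → (Fin d → ℤ) → ℂ} (hm : IsMultiplier 0 m)
    (A : SymbolRing d) : iDt (schur m hm A) = schur m hm (iDt A) := by
  ext p t j k
  refine iDt_entry_eq ?_
  convert! (A.hasDerivAt_entry p j k t).const_mul (m p j k) using 1
  rw [entry_schur]; ring

/-- `B` is the matrix of `i ∂_t A - [D, A]`, where `D` is the diagonal matrix of the `μ j`. -/
def IsHeisenberg (μ : (Fin d → ℤ) → ℝ) (A B : SymbolRing d) : Prop :=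
  ∀ p t j k, B.entry p t j k = (iDt A).entry p t j k - ((μ j : ℂ) - μ k) * A.entry p t j k

namespace IsHeisenberg

variable {μ : (Fin d → ℤ) → ℝ} {A B A' B' : SymbolRing d}

lemma add (hA : IsHeisenberg μ A A') (hB : IsHeisenberg μ B B') :
    IsHeisenberg μ (A + B) (A' + B') := by
  intro p t j k
  simp only [map_add, entry_add, hA p t j k, hB p t j k]; ring

lemma neg (hA : IsHeisenberg μ A A') : IsHeisenberg μ (-A) (-A') := by
  intro p t j k
  simp only [map_neg, entry_neg, hA p t j k]; ring

lemma one : IsHeisenberg μ (1 : SymbolRing d) 0 := by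
  intro p t j k
  have : iDt (1 : SymbolRing d) = 0 := by
    ext p t j k
    refine iDt_entry_eq ?_
    rw [entry_zero, mul_zero]
    exact hasDerivAt_const t ((1 : SymbolRing d).entry p t j k)
  by_cases h : j = k <;> simp [this, entry_one, h]

lemma mul (hA : IsHeisenberg μ A A') (hB : IsHeisenberg μ B B') :
    IsHeisenberg μ (A * B) (A' * B + A * B') := by
  intro p t j k
  rw [iDt_mul]
  have h1 := (A'.summable_mul B p t j k).hasSum.add (A.summable_mul B' p t j k).hasSum
  have h2 := ((iDt A).summable_mul B p t j k).hasSum.add (A.summable_mul (iDt B) p t j k).hasSum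
  have h3 := h2.sub ((A.summable_mul B p t j k).hasSum.mul_left ((μ j : ℂ) - μ k))
  refine h1.unique ?_
  convert! h3 using 1
  funext m
  rw [hA p t j m, hB p t m k]; ring

lemma schur {m : Param → (Fin d → ℤ) → (Fin d → ℤ) → ℂ} (hm : IsMultiplier 0 m)
    (hA : IsHeisenberg μ A A') :
    IsHeisenberg μ (SymbolRing.schur m hm A) (SymbolRing.schur m hm A') := by
  intro p t j k
  rw [iDt_schur, entry_schur, entry_schur, entry_schur, hA p t j k]; ring

lemma pow (hA : IsHeisenberg μ A A') (hA1 : A ∈ order d 1) (n : ℕ) :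
    ∃ P ∈ order d n, IsHeisenberg μ (A ^ (n + 1)) P := by
  induction n with
  | zero => exact ⟨A', mem_order_zero _, by simpa using hA⟩
  | succ n ih =>
    obtain ⟨P, hP, h⟩ := ih
    refine ⟨_, ?_, by rw [pow_succ]; exact h.mul hA⟩
    exact add_mem (mul_mem_order hP hA1) (mul_mem_order_left (pow_mem_order hA1 (n + 1)) A')

lemma geom_sum (hA : IsHeisenberg μ A A') (hA1 : A ∈ order d 1) (n : ℕ) :
    ∃ P, IsHeisenberg μ (∑ i ∈ Finset.range (n + 1), A ^ i) P := by
  induction n with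
  | zero => exact ⟨0, by simpa using one⟩
  | succ n ih =>
    obtain ⟨P, h⟩ := ih
    obtain ⟨Q, -, h'⟩ := hA.pow hA1 n
    exact ⟨P + Q, by rw [Finset.sum_range_succ]; exact h.add h'⟩

end IsHeisenberg

/-! ### Normal form -/

section NormalForm

variable (μ : (Fin d → ℤ) → ℝ)

open Classical in
/-- Restriction to the entries with `|μ j - μ k| ≤ Γ`. -/
noncomputable def resonantMask (p : Param) (j k : Fin d → ℤ) : ℂ :=
  if |μ j - μ k| ≤ p then 1 else 0

open Classical in
/-- Division by `μ j - μ k` of the entries with `|μ j - μ k| > Γ`. -/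
noncomputable def divisorMask (p : Param) (j k : Fin d → ℤ) : ℂ :=
  if |μ j - μ k| ≤ p then 0 else ((μ j : ℂ) - μ k)⁻¹

lemma isMultiplier_resonantMask : IsMultiplier 0 (resonantMask μ) := by
  refine ⟨1, zero_le_one, 0, fun p j k => ?_⟩
  unfold resonantMask
  split_ifs <;> simp

lemma isMultiplier_divisorMask : IsMultiplier 1 (divisorMask μ) := by
  refine ⟨1, zero_le_one, 0, fun p j k => ?_⟩
  have hp := param_pos p
  unfold divisorMask
  split_ifs with h
  · simpa using hp.le
  · rw [norm_inv, ← Complex.ofReal_sub, Complex.norm_real, Real.norm_eq_abs]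
    simpa using inv_anti₀ hp (not_le.1 h).le

lemma _root_.SobolevGrowth.IsMultiplier.zero {c : ℕ}
    {m : Param → (Fin d → ℤ) → (Fin d → ℤ) → ℂ} (hm : IsMultiplier c m) : IsMultiplier 0 m := by
  obtain ⟨C, hC, q, h⟩ := hm
  refine ⟨C, hC, q, fun p j k => (h p j k).trans ?_⟩
  have := inv_le_one_of_one_le₀ (one_le_pow₀ (n := c) (param_one_le p))
  have h1 : (1 : ℝ) ≤ (1 + ‖j - k‖) ^ q := one_le_pow₀ (by simp)
  rw [pow_zero, inv_one]
  gcongr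

/-- The near-resonant part of a symbol. -/
noncomputable def resonantPart : SymbolRing d →+ SymbolRing d :=
  schur (resonantMask μ) (isMultiplier_resonantMask μ)

/-- The solution `X` of `[D, X] = F - resonantPart F`. -/
noncomputable def solveHomological : SymbolRing d →+ SymbolRing d :=
  schur (divisorMask μ) (isMultiplier_divisorMask μ).zero

lemma resonantPart_mem_order {a : ℕ} {F : SymbolRing d} (hF : F ∈ order d a) :
    resonantPart μ F ∈ order d a :=
  schur_mem_order (isMultiplier_resonantMask μ) (isMultiplier_resonantMask μ) hF

lemma solveHomological_mem_order {a : ℕ} {F : SymbolRing d} (hF : F ∈ order d a) :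
    solveHomological μ F ∈ order d (a + 1) :=
  schur_mem_order (isMultiplier_divisorMask μ).zero (isMultiplier_divisorMask μ) hF

lemma isHeisenberg_solveHomological (F : SymbolRing d) :
    IsHeisenberg μ (solveHomological μ F)
      (iDt (solveHomological μ F) - F + resonantPart μ F) := by
  intro p t j k
  simp only [entry_add, entry_sub, solveHomological, resonantPart, entry_schur, resonantMask,
    divisorMask]
  split_ifs with h
  · simp
  · have : (μ j : ℂ) - μ k ≠ 0 := by
      intro h0
      rw [← Complex.ofReal_sub, Complex.ofReal_eq_zero] at h0
      exact h (by rw [h0, abs_zero]; exact (param_pos p).le)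
    field_simp
    ring

variable (V : SymbolRing d)

/-- The right-hand side of the fixed point equation for the normal form. -/
noncomputable def normalFormRhs (x : SymbolRing d × SymbolRing d) : SymbolRing d :=
  V + x.1 * V + iDt x.1 - x.2 * x.1

/-- Approximate solutions of the fixed point equation. -/
noncomputable def normalFormIterate : ℕ → SymbolRing d × SymbolRing d
  | 0 => (0, 0)
  | n + 1 => (solveHomological μ (normalFormRhs V (normalFormIterate n)),
      resonantPart μ (normalFormRhs V (normalFormIterate n)))

lemma normalFormIterate_fst_mem (n : ℕ) : (normalFormIterate μ V n).1 ∈ order d 1 := by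
  cases n with
  | zero => exact zero_mem _
  | succ n => exact solveHomological_mem_order μ (mem_order_zero _)

lemma normalFormRhs_sub_mem {n : ℕ}
    (hX : (normalFormIterate μ V (n + 1)).1 - (normalFormIterate μ V n).1 ∈ order d (n + 1))
    (hZ : (normalFormIterate μ V (n + 1)).2 - (normalFormIterate μ V n).2 ∈ order d n) :
    normalFormRhs V (normalFormIterate μ V (n + 1)) - normalFormRhs V (normalFormIterate μ V n)
      ∈ order d (n + 1) := by
  have h1 := normalFormIterate_fst_mem μ V n
  generalize normalFormIterate μ V (n + 1) = y at *
  generalize normalFormIterate μ V n = x at *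
  have e : normalFormRhs V y - normalFormRhs V x = (y.1 - x.1) * V + iDt (y.1 - x.1)
      - y.2 * (y.1 - x.1) - (y.2 - x.2) * x.1 := by
    simp only [normalFormRhs, map_sub]; noncomm_ring
  rw [e]
  exact sub_mem (sub_mem (add_mem (mul_mem_order_left hX _) (iDt_mem_order hX))
    (mul_mem_order_right hX _)) (mul_mem_order hZ h1)

lemma normalFormIterate_succ_sub_mem (n : ℕ) :
    (normalFormIterate μ V (n + 1)).1 - (normalFormIterate μ V n).1 ∈ order d (n + 1) ∧
      (normalFormIterate μ V (n + 1)).2 - (normalFormIterate μ V n).2 ∈ order d n := by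
  induction n with
  | zero =>
    refine ⟨?_, mem_order_zero _⟩
    exact sub_mem (normalFormIterate_fst_mem μ V 1) (zero_mem _)
  | succ n ih =>
    have h := normalFormRhs_sub_mem μ V ih.1 ih.2
    rw [normalFormIterate, normalFormIterate, ← map_sub, ← map_sub]
    exact ⟨solveHomological_mem_order μ h, resonantPart_mem_order μ h⟩

/-- There is a near-identity `1 + X` conjugating `D + V` to `D + Z` up to an error `O(Γ^(-K))`,
with `Z` supported on the near-resonant entries. -/
theorem exists_normalForm (K : ℕ) : ∃ X X' Z R : SymbolRing d,
    X ∈ order d 1 ∧ R ∈ order d K ∧ IsHeisenberg μ X X' ∧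
      X' = Z * (1 + X) - (1 + X) * V + R ∧
      ∀ (p : Param) t j k, (p : ℝ) < |μ j - μ k| → Z.entry p t j k = 0 := by
  have h := normalFormIterate_succ_sub_mem μ V K
  refine ⟨(normalFormIterate μ V (K + 1)).1, _, (normalFormIterate μ V (K + 1)).2, _,
    normalFormIterate_fst_mem μ V _,
    order_mono (Nat.le_succ K) (normalFormRhs_sub_mem μ V h.1 h.2),
    isHeisenberg_solveHomological μ (normalFormRhs V (normalFormIterate μ V K)), ?_, ?_⟩
  · change iDt (normalFormIterate μ V (K + 1)).1 - _ + (normalFormIterate μ V (K + 1)).2 = _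
    generalize normalFormIterate μ V (K + 1) = y
    rw [normalFormRhs.eq_1 V y]
    noncomm_ring
  · intro p t j k hjk
    simp [normalFormIterate, resonantPart, entry_schur, resonantMask, not_le.2 hjk]

/-- An approximate inverse `T` of the near-identity `1 + X` satisfies the dual conjugation
relation. -/
theorem exists_approxInverse {μ : (Fin d → ℤ) → ℝ} {V X X' Z R : SymbolRing d} {K : ℕ}
    (hX : X ∈ order d 1) (hR : R ∈ order d K)
    (hXX' : IsHeisenberg μ X X') (hX' : X' = Z * (1 + X) - (1 + X) * V + R) :
    ∃ T T' R' : SymbolRing d, T - 1 ∈ order d 1 ∧ R' ∈ order d K ∧ IsHeisenberg μ T T' ∧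
      T' = V * T - T * Z + R' := by
  have hX1 : -X ∈ order d 1 := neg_mem hX
  obtain ⟨T', hT'⟩ := hXX'.neg.geom_sum hX1 K
  obtain ⟨P, hP, hPX⟩ := hXX'.neg.pow hX1 K
  have hTS := geom_sum_mul_neg (-X) (K + 1)
  have hST := mul_neg_geom_sum (-X) (K + 1)
  have hT1 : ∑ i ∈ Finset.range (K + 1), (-X) ^ i - 1 ∈ order d 1 := by
    rw [Finset.sum_range_succ', pow_zero, add_sub_cancel_right]
    exact sum_mem fun i _ => order_mono (Nat.le_add_left 1 i) (pow_mem_order hX1 (i + 1))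
  have hE : (-X) ^ (K + 1) ∈ order d K := order_mono (Nat.le_succ K) (pow_mem_order hX1 (K + 1))
  generalize ∑ i ∈ Finset.range (K + 1), (-X) ^ i = T at *
  generalize (-X) ^ (K + 1) = E at *
  rw [sub_neg_eq_add] at hTS hST
  have hderiv : T' * (1 + X) + T * X' = -P := by
    have h1 := hT'.mul (IsHeisenberg.one.add hXX')
    have h2 := (IsHeisenberg.one (μ := μ)).add hPX.neg
    rw [hTS, sub_eq_add_neg] at h1
    rw [zero_add] at h1 h2
    ext p t j k
    rw [h1 p t j k, h2 p t j k]
  refine ⟨T, T', -(P * T) + T' * E + T * Z * E - E * V * T - T * R * T, hT1, ?_, hT', ?_⟩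
  · exact sub_mem (sub_mem (add_mem (add_mem (neg_mem (mul_mem_order_left hP _))
      (mul_mem_order_right hE _)) (mul_mem_order_right hE _))
      (mul_mem_order_left (mul_mem_order_left hE _) _))
      (mul_mem_order_left (mul_mem_order_right hR _) _)
  · have h3 : T' * ((1 + X) * T) + T * X' * T = -P * T := by
      rw [← hderiv]; noncomm_ring
    have h4 : T * X' * T = T * Z * ((1 + X) * T) - (T * (1 + X)) * V * T + T * R * T := by
      rw [hX']; noncomm_ring
    rw [h4, hTS, hST] at h3
    calc T' = (T' * (1 - E) + (T * Z * (1 - E) - (1 - E) * V * T + T * R * T))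
        + T' * E - (T * Z * (1 - E) - (1 - E) * V * T + T * R * T) := by noncomm_ring
      _ = -P * T + T' * E - (T * Z * (1 - E) - (1 - E) * V * T + T * R * T) := by rw [h3]
      _ = _ := by noncomm_ring

end NormalForm

end SymbolRing

/-! ### Conjugation by weights -/

/-- A family of positive weights on `ℤ^d` of at most polynomial variation, constant on pairs of
points which are close together and have close values of `μ`. -/
structure IsClusterWeight (μ : (Fin d → ℤ) → ℝ) (w : Param → (Fin d → ℤ) → ℝ) : Prop where
  pos : ∀ p j, 0 < w p j
  moderate : ∃ C : ℝ, 0 ≤ C ∧ ∃ q : ℕ, ∀ p j k, w p j ≤ C * w p k * (1 + ‖j - k‖) ^ q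
  eq_of_near : ∀ (p : Param) j k, ‖j - k‖ ≤ p → |μ j - μ k| ≤ p → w p j = w p k

/-- The multiplier `w j / w k`. -/
noncomputable def ratio (w : Param → (Fin d → ℤ) → ℝ) (p : Param) (j k : Fin d → ℤ) : ℂ :=
  (w p j / w p k : ℝ)

/-- The multiplier `w k / w j`. -/
noncomputable def ratioInv (w : Param → (Fin d → ℤ) → ℝ) (p : Param) (j k : Fin d → ℤ) : ℂ :=
  (w p k / w p j : ℝ)

namespace IsClusterWeight

variable {μ : (Fin d → ℤ) → ℝ} {w : Param → (Fin d → ℤ) → ℝ}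

lemma isMultiplier_ratio (hw : IsClusterWeight μ w) : IsMultiplier 0 (ratio w) := by
  obtain ⟨C, hC, q, h⟩ := hw.moderate
  refine ⟨C, hC, q, fun p j k => ?_⟩
  have h1 := hw.pos p j
  have h2 := hw.pos p k
  rw [ratio, Complex.norm_real, Real.norm_of_nonneg (by positivity), div_le_iff₀ h2]
  calc w p j ≤ _ := h p j k
    _ = _ := by simp; ring

lemma isMultiplier_ratioInv (hw : IsClusterWeight μ w) : IsMultiplier 0 (ratioInv w) := by
  obtain ⟨C, hC, q, h⟩ := hw.isMultiplier_ratio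
  refine ⟨C, hC, q, fun p j k => ?_⟩
  rw [norm_sub_rev j k]
  exact h p k j

lemma ratio_mul (hw : IsClusterWeight μ w) (p : Param) (j n k : Fin d → ℤ) :
    ratio w p j k = ratio w p j n * ratio w p n k := by
  have := (hw.pos p n).ne'
  rw [ratio, ratio, ratio, ← Complex.ofReal_mul, div_mul_div_cancel₀ this]

lemma ratio_self (hw : IsClusterWeight μ w) (p : Param) (j : Fin d → ℤ) : ratio w p j j = 1 := by
  rw [ratio, div_self (hw.pos p j).ne', Complex.ofReal_one]

lemma ratioInv_mul (hw : IsClusterWeight μ w) (p : Param) (j n k : Fin d → ℤ) :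
    ratioInv w p j k = ratioInv w p j n * ratioInv w p n k := by
  rw [mul_comm]; exact hw.ratio_mul p k n j

open Classical in
lemma isMultiplier_far (hw : IsClusterWeight μ w) (K : ℕ) :
    IsMultiplier K fun p j k => if ‖j - k‖ ≤ p then 0 else ratio w p j k - ratioInv w p j k := by
  obtain ⟨C, hC, q, h⟩ := hw.isMultiplier_ratio
  refine ⟨C + C, by positivity, q + K, fun p j k => ?_⟩
  have hp := param_pos p
  beta_reduce
  split_ifs with hjk
  · rw [norm_zero]; positivity
  · have h1 := h p j k
    have h2 := h p k j
    rw [norm_sub_rev k j] at h2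
    have h3 : 1 ≤ ((p : ℝ) ^ K)⁻¹ * (1 + ‖j - k‖) ^ K := by
      rw [inv_mul_eq_div, one_le_div (by positivity)]
      exact pow_le_pow_left₀ hp.le (by linarith [not_le.1 hjk]) K
    have h4 : 0 ≤ (C + C) * (1 + ‖j - k‖) ^ q := by positivity
    calc ‖ratio w p j k - ratioInv w p j k‖ ≤ ‖ratio w p j k‖ + ‖ratio w p k j‖ :=
          norm_sub_le _ _
      _ ≤ (C + C) * (1 + ‖j - k‖) ^ q := by
          simp only [pow_zero, inv_one, mul_one] at h1 h2
          linarith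
      _ ≤ (C + C) * (1 + ‖j - k‖) ^ q * (((p : ℝ) ^ K)⁻¹ * (1 + ‖j - k‖) ^ K) :=
          le_mul_of_one_le_right h4 h3
      _ = _ := by rw [pow_add]; ring

end IsClusterWeight

namespace SymbolRing

lemma schur_mul {m : Param → (Fin d → ℤ) → (Fin d → ℤ) → ℂ} (hm : IsMultiplier 0 m)
    (h : ∀ p j n k, m p j k = m p j n * m p n k) (A B : SymbolRing d) :
    schur m hm (A * B) = schur m hm A * schur m hm B := by
  ext p t j k
  rw [entry_schur, entry_mul, entry_mul, ← tsum_mul_left]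
  refine tsum_congr fun n => ?_
  rw [entry_schur, entry_schur, h p j n k]; ring

lemma schur_one {m : Param → (Fin d → ℤ) → (Fin d → ℤ) → ℂ} (hm : IsMultiplier 0 m)
    (h : ∀ p j, m p j j = 1) : schur m hm 1 = 1 := by
  ext p t j k
  rw [entry_schur, entry_one]
  split_ifs with hjk
  · subst hjk; simp [h]
  · simp

/-- The approximately conserved energy: `A` is close to the identity and
`i ∂_t A - [D, A] = V₋ A - A V₊ + O(Γ^(-K))`, where `V₊ = w V w⁻¹` and `V₋ = w⁻¹ V w`. -/
theorem exists_energySymbol {μ : (Fin d → ℤ) → ℝ} {w : Param → (Fin d → ℤ) → ℝ}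
    (hw : IsClusterWeight μ w) (V : SymbolRing d) (K : ℕ) :
    ∃ A A' R : SymbolRing d, A - 1 ∈ order d 1 ∧ R ∈ order d K ∧ IsHeisenberg μ A A' ∧
      A' = schur _ hw.isMultiplier_ratioInv V * A - A * schur _ hw.isMultiplier_ratio V + R := by
  obtain ⟨X, X', Z, R, hX, hR, hXX', hX', hZ⟩ := exists_normalForm μ V K
  obtain ⟨T, T', R', hT, hR', hTT', hT'⟩ := exists_approxInverse hX hR hXX' hX'
  have hS := ((IsHeisenberg.one (μ := μ)).add hXX').schur hw.isMultiplier_ratio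
  have hTs := hTT'.schur hw.isMultiplier_ratioInv
  have hZZ : schur _ hw.isMultiplier_ratio Z - schur _ hw.isMultiplier_ratioInv Z
      ∈ order d K := by
    classical
    have h0 := schur_mem_order (hw.isMultiplier_far K).zero (hw.isMultiplier_far K)
      Z.mem_order_zero
    rw [zero_add] at h0
    convert! h0 using 1
    ext p t j k
    rw [entry_sub, entry_schur, entry_schur, entry_schur]
    split_ifs with hjk
    · by_cases hμ : |μ j - μ k| ≤ p
      · simp [ratio, ratioInv, hw.eq_of_near p j k hjk hμ]
      · simp [hZ p t j k (not_le.1 hμ)]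
    · ring
  have hmem {a : ℕ} {B : SymbolRing d} (hB : B ∈ order d a) :
      schur _ hw.isMultiplier_ratio B ∈ order d a :=
    schur_mem_order hw.isMultiplier_ratio hw.isMultiplier_ratio hB
  have hmem' {a : ℕ} {B : SymbolRing d} (hB : B ∈ order d a) :
      schur _ hw.isMultiplier_ratioInv B ∈ order d a :=
    schur_mem_order hw.isMultiplier_ratioInv hw.isMultiplier_ratioInv hB
  have hone : schur _ hw.isMultiplier_ratio (1 : SymbolRing d) = 1 :=
    schur_one _ hw.ratio_self
  have hone' : schur _ hw.isMultiplier_ratioInv (1 : SymbolRing d) = 1 :=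
    schur_one _ hw.ratio_self
  have hA := hTs.mul hS
  rw [zero_add, hX', hT'] at hA
  have hX₁ := hmem hX
  have hT₁ := hmem' hT
  have hR₁ := hmem hR
  have hR₂ := hmem' hR'
  simp only [map_add, map_sub, schur_mul hw.isMultiplier_ratio hw.ratio_mul,
    schur_mul hw.isMultiplier_ratioInv hw.ratioInv_mul, hone, hone'] at hA hT₁
  generalize schur _ hw.isMultiplier_ratio X = x at *
  generalize schur _ hw.isMultiplier_ratioInv T = y at *
  generalize schur _ hw.isMultiplier_ratio Z = z at *
  generalize schur _ hw.isMultiplier_ratioInv Z = z' at *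
  generalize schur _ hw.isMultiplier_ratio V = v at *
  generalize schur _ hw.isMultiplier_ratioInv V = v' at *
  generalize schur _ hw.isMultiplier_ratio R = ρ at *
  generalize schur _ hw.isMultiplier_ratioInv R' = ρ' at *
  refine ⟨_, _, ρ' * (1 + x) + y * ρ + y * (z - z') * (1 + x), ?_, ?_, hA, ?_⟩
  · have : y * (1 + x) - 1 = (y - 1) * (1 + x) + x := by noncomm_ring
    rw [this]
    exact add_mem (mul_mem_order_left hT₁ _) hX₁
  · exact add_mem (add_mem (mul_mem_order_left hR₂ _) (mul_mem_order_right hR₁ _))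
      (mul_mem_order_left (mul_mem_order_right hZZ _) _)
  · noncomm_ring

end SymbolRing

/-! ### Quadratic forms -/

section Forms

variable {ι κ : Type*}

lemma tsum_marginal {f : ι × κ → ℂ} (hf : Summable fun x => ‖f x‖) :
    (Summable fun a => ‖∑' b, f (a, b)‖) ∧ ∑' a, ‖∑' b, f (a, b)‖ ≤ ∑' x, ‖f x‖ ∧
      ∑' a, ∑' b, f (a, b) = ∑' x, f x := by
  have h1 := hf.prod
  have hle : ∀ a, ‖∑' b, f (a, b)‖ ≤ ∑' b, ‖f (a, b)‖ := fun a =>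
    norm_tsum_le_tsum_norm (hf.prod_factor a)
  have h2 : Summable fun a => ‖∑' b, f (a, b)‖ :=
    Summable.of_nonneg_of_le (fun _ => norm_nonneg _) hle h1
  refine ⟨h2, ?_, ?_⟩
  · rw [hf.tsum_prod]
    exact h2.tsum_le_tsum hle h1
  · exact hf.of_norm.tsum_prod.symm

lemma summable_pair {g : (Fin d → ℤ) → ℝ} (hg0 : ∀ j, 0 ≤ g j) (hg : Summable g) :
    HasSum (fun x : (Fin d → ℤ) × (Fin d → ℤ) => latticeWeight (x.1 - x.2) * g x.1)
      ((∑' m : Fin d → ℤ, latticeWeight m) * ∑' j, g j) := by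
  have hinner (j : Fin d → ℤ) := (summable_latticeWeight_sub j).mul_right (g j)
  have hval (j : Fin d → ℤ) : ∑' k, latticeWeight (j - k) * g j
      = (∑' m : Fin d → ℤ, latticeWeight m) * g j := by
    rw [tsum_mul_right, tsum_latticeWeight_sub]
  have hs : Summable fun x : (Fin d → ℤ) × (Fin d → ℤ) => latticeWeight (x.1 - x.2) * g x.1 := by
    refine (summable_prod_of_nonneg fun x => mul_nonneg (latticeWeight_nonneg _) (hg0 _)).2
      ⟨hinner, ?_⟩
    simp only [hval]
    exact hg.mul_left _
  convert! hs.hasSum using 1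
  rw [hs.tsum_prod]
  simp only [hval, tsum_mul_left]

lemma summable_triple {g : (Fin d → ℤ) → ℝ} (hg0 : ∀ j, 0 ≤ g j) (hg : Summable g) :
    HasSum (fun x : ((Fin d → ℤ) × (Fin d → ℤ)) × (Fin d → ℤ) =>
      latticeWeight (x.1.1 - x.1.2) * latticeWeight (x.1.2 - x.2) * g x.1.1)
      ((∑' m : Fin d → ℤ, latticeWeight m) ^ 2 * ∑' j, g j) := by
  have h0 := summable_pair hg0 hg
  have hinner (x : (Fin d → ℤ) × (Fin d → ℤ)) := ((summable_latticeWeight_sub x.2).mul_left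
    (latticeWeight (x.1 - x.2))).mul_right (g x.1)
  have hval (x : (Fin d → ℤ) × (Fin d → ℤ)) :
      ∑' k, latticeWeight (x.1 - x.2) * latticeWeight (x.2 - k) * g x.1
      = (∑' m : Fin d → ℤ, latticeWeight m) * (latticeWeight (x.1 - x.2) * g x.1) := by
    rw [tsum_mul_right, tsum_mul_left, tsum_latticeWeight_sub]; ring
  have hs : Summable fun x : ((Fin d → ℤ) × (Fin d → ℤ)) × (Fin d → ℤ) =>
      latticeWeight (x.1.1 - x.1.2) * latticeWeight (x.1.2 - x.2) * g x.1.1 := by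
    refine (summable_prod_of_nonneg fun x => mul_nonneg (mul_nonneg (latticeWeight_nonneg _)
      (latticeWeight_nonneg _)) (hg0 _)).2 ⟨hinner, ?_⟩
    simp only [hval]
    exact h0.summable.mul_left _
  convert! hs.hasSum using 1
  rw [hs.tsum_prod]
  simp only [hval, tsum_mul_left, h0.tsum_eq]
  ring

lemma two_mul_le_sq_add_sq' (a b : ℝ) : a * b ≤ (b ^ 2 + a ^ 2) / 2 := by
  nlinarith [sq_nonneg (a - b)]

/-- Schur test for matrices dominated by the lattice weight. -/
lemma norm_form_le {b : (Fin d → ℤ) → (Fin d → ℤ) → ℂ} {c : ℝ} (hc : 0 ≤ c)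
    (hb : ∀ j k, ‖b j k‖ ≤ c * latticeWeight (j - k)) {u : (Fin d → ℤ) → ℂ}
    (hu : Summable fun j => ‖u j‖ ^ 2) :
    (Summable fun x : (Fin d → ℤ) × (Fin d → ℤ) => ‖b x.1 x.2 * u x.2 * star (u x.1)‖) ∧
      ∑' x : (Fin d → ℤ) × (Fin d → ℤ), ‖b x.1 x.2 * u x.2 * star (u x.1)‖ ≤
        c * (∑' m : Fin d → ℤ, latticeWeight m) * ∑' j, ‖u j‖ ^ 2 := by
  have h1 := summable_pair (fun j => sq_nonneg ‖u j‖) hu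
  have h2 := (Equiv.prodComm _ _).hasSum_iff.2 h1
  have h3 := (h1.add h2).mul_left (c / 2)
  have hle : ∀ x : (Fin d → ℤ) × (Fin d → ℤ), ‖b x.1 x.2 * u x.2 * star (u x.1)‖ ≤
      c / 2 * (latticeWeight (x.1 - x.2) * ‖u x.1‖ ^ 2 + ((fun x : (Fin d → ℤ) × (Fin d → ℤ) =>
        latticeWeight (x.1 - x.2) * ‖u x.1‖ ^ 2) ∘ (Equiv.prodComm _ _)) x) := by
    intro x
    simp only [Function.comp, Equiv.prodComm_apply, Prod.fst_swap, Prod.snd_swap]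
    rw [← latticeWeight_neg (x.2 - x.1), neg_sub, norm_mul, norm_mul, norm_star]
    have hw := mul_nonneg hc (latticeWeight_nonneg (x.1 - x.2))
    calc ‖b x.1 x.2‖ * ‖u x.2‖ * ‖u x.1‖ = ‖b x.1 x.2‖ * (‖u x.2‖ * ‖u x.1‖) := by ring
      _ ≤ (c * latticeWeight (x.1 - x.2)) * ((‖u x.1‖ ^ 2 + ‖u x.2‖ ^ 2) / 2) := by
          gcongr
          · exact hb _ _
          · exact two_mul_le_sq_add_sq' _ _
      _ = _ := by ring
  have hs := Summable.of_nonneg_of_le (fun _ => norm_nonneg _) hle h3.summable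
  refine ⟨hs, (hs.tsum_le_tsum hle h3.summable).trans (le_of_eq ?_)⟩
  rw [h3.tsum_eq]; ring

lemma norm_form_comp_le {a b : (Fin d → ℤ) → (Fin d → ℤ) → ℂ} {c c' : ℝ} (hc : 0 ≤ c)
    (hc' : 0 ≤ c') (ha : ∀ j k, ‖a j k‖ ≤ c * latticeWeight (j - k))
    (hb : ∀ j k, ‖b j k‖ ≤ c' * latticeWeight (j - k)) {u : (Fin d → ℤ) → ℂ}
    (hu : Summable fun j => ‖u j‖ ^ 2) :
    (Summable fun x : ((Fin d → ℤ) × (Fin d → ℤ)) × (Fin d → ℤ) =>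
      ‖a x.1.1 x.1.2 * b x.1.2 x.2 * u x.2 * star (u x.1.1)‖) ∧
      ∑' x : ((Fin d → ℤ) × (Fin d → ℤ)) × (Fin d → ℤ),
        ‖a x.1.1 x.1.2 * b x.1.2 x.2 * u x.2 * star (u x.1.1)‖ ≤
        c * c' * (∑' m : Fin d → ℤ, latticeWeight m) ^ 2 * ∑' j, ‖u j‖ ^ 2 := by
  let e : ((Fin d → ℤ) × (Fin d → ℤ)) × (Fin d → ℤ) ≃ ((Fin d → ℤ) × (Fin d → ℤ)) × (Fin d → ℤ) :=
    ⟨fun x => ((x.2, x.1.2), x.1.1), fun x => ((x.2, x.1.2), x.1.1), fun _ => rfl, fun _ => rfl⟩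
  have h1 := summable_triple (fun j => sq_nonneg ‖u j‖) hu
  have h2 := e.hasSum_iff.2 h1
  have h3 := (h1.add h2).mul_left (c * c' / 2)
  have hle : ∀ x : ((Fin d → ℤ) × (Fin d → ℤ)) × (Fin d → ℤ),
      ‖a x.1.1 x.1.2 * b x.1.2 x.2 * u x.2 * star (u x.1.1)‖ ≤
      c * c' / 2 * (latticeWeight (x.1.1 - x.1.2) * latticeWeight (x.1.2 - x.2) * ‖u x.1.1‖ ^ 2
        + ((fun x : ((Fin d → ℤ) × (Fin d → ℤ)) × (Fin d → ℤ) => latticeWeight (x.1.1 - x.1.2)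
          * latticeWeight (x.1.2 - x.2) * ‖u x.1.1‖ ^ 2) ∘ e) x) := by
    intro x
    simp only [Function.comp, e, Equiv.coe_fn_mk]
    rw [← latticeWeight_neg (x.2 - x.1.2), ← latticeWeight_neg (x.1.2 - x.1.1), neg_sub, neg_sub,
      norm_mul, norm_mul, norm_mul, norm_star]
    have hw := mul_nonneg hc (latticeWeight_nonneg (x.1.1 - x.1.2))
    have hw' := mul_nonneg hc' (latticeWeight_nonneg (x.1.2 - x.2))
    calc ‖a x.1.1 x.1.2‖ * ‖b x.1.2 x.2‖ * ‖u x.2‖ * ‖u x.1.1‖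
        = ‖a x.1.1 x.1.2‖ * ‖b x.1.2 x.2‖ * (‖u x.2‖ * ‖u x.1.1‖) := by ring
      _ ≤ (c * latticeWeight (x.1.1 - x.1.2)) * (c' * latticeWeight (x.1.2 - x.2))
          * ((‖u x.1.1‖ ^ 2 + ‖u x.2‖ ^ 2) / 2) := by
          gcongr
          · exact ha _ _
          · exact hb _ _
          · exact two_mul_le_sq_add_sq' _ _
      _ = _ := by ring
  have hs := Summable.of_nonneg_of_le (fun _ => norm_nonneg _) hle h3.summable
  refine ⟨hs, (hs.tsum_le_tsum hle h3.summable).trans (le_of_eq ?_)⟩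
  rw [h3.tsum_eq]; ring

end Forms

/-! ### The energy estimate -/

/-- If `f x` has derivative `g x` for each `x`, then `∑ f` grows at most at the rate `‖∑ g‖`. -/
lemma norm_tsum_sub_tsum_le {ι : Type*} [Countable ι] {f g : ι → ℝ → ℂ} {a b B κ : ℝ}
    (hfg : ∀ x s, HasDerivAt (f x) (g x s) s) (hf : ∀ s, Summable fun x => f x s)
    (hg : ∀ s ∈ Set.uIoc a b, Summable fun x => ‖g x s‖)
    (hB : ∀ s ∈ Set.uIoc a b, ∑' x, ‖g x s‖ ≤ B)
    (hκ : ∀ s ∈ Set.uIoc a b, ‖∑' x, g x s‖ ≤ κ) :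
    ‖∑' x, f x b - ∑' x, f x a‖ ≤ κ * |b - a| := by
  have hmeas (x : ι) : Measurable (g x) := by
    have : g x = deriv (f x) := funext fun s => (hfg x s).deriv.symm
    rw [this]
    exact measurable_deriv _
  have hmeasF (F : Finset ι) : Measurable fun s => ∑ x ∈ F, g x s :=
    Finset.measurable_fun_sum _ fun x _ => hmeas x
  have hbound (F : Finset ι) : ∀ s ∈ Set.uIoc a b, ‖∑ x ∈ F, g x s‖ ≤ B := fun s hs =>
    ((norm_sum_le _ _).trans ((hg s hs).sum_le_tsum _ fun _ _ => norm_nonneg _)).trans (hB s hs)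
  have hintegral (F : Finset ι) :
      ∫ s in a..b, ∑ x ∈ F, g x s = ∑ x ∈ F, f x b - ∑ x ∈ F, f x a := by
    refine intervalIntegral.integral_eq_sub_of_hasDerivAt
      (f := fun s => ∑ x ∈ F, f x s) (fun s _ => ?_) ?_
    · exact HasDerivAt.fun_sum fun x _ => hfg x s
    · rw [intervalIntegrable_iff]
      refine MeasureTheory.Measure.integrableOn_of_bounded (M := B) (by simp)
        (hmeasF F).aestronglyMeasurable ?_
      exact (MeasureTheory.ae_restrict_iff' measurableSet_uIoc).2 (.of_forall (hbound F))
  have h1 : Filter.Tendsto (fun F : Finset ι => ∫ s in a..b, ∑ x ∈ F, g x s) Filter.atTop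
      (nhds (∫ s in a..b, ∑' x, g x s)) := by
    refine intervalIntegral.tendsto_integral_filter_of_dominated_convergence (fun _ => B)
      (.of_forall fun F => (hmeasF F).aestronglyMeasurable)
      (.of_forall fun F => .of_forall (hbound F)) (by simp) (.of_forall fun s hs => ?_)
    exact (hg s hs).of_norm.hasSum
  have h2 : Filter.Tendsto (fun F : Finset ι => ∫ s in a..b, ∑ x ∈ F, g x s) Filter.atTop
      (nhds (∑' x, f x b - ∑' x, f x a)) := by
    simp only [hintegral]
    exact Filter.Tendsto.sub (hf b).hasSum (hf a).hasSum
  rw [tendsto_nhds_unique h2 h1]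
  exact intervalIntegral.norm_integral_le_of_norm_le_const hκ

/-- The quadratic form `⟨b u, u⟩` attached to a matrix. -/
noncomputable def form (b : (Fin d → ℤ) → (Fin d → ℤ) → ℂ) (u : (Fin d → ℤ) → ℂ) : ℂ :=
  ∑' x : (Fin d → ℤ) × (Fin d → ℤ), b x.1 x.2 * u x.2 * star (u x.1)

lemma norm_form_le_of_le {b : (Fin d → ℤ) → (Fin d → ℤ) → ℂ} {c : ℝ} (hc : 0 ≤ c)
    (hb : ∀ j k, ‖b j k‖ ≤ c * latticeWeight (j - k)) {u : (Fin d → ℤ) → ℂ}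
    (hu : Summable fun j => ‖u j‖ ^ 2) :
    ‖form b u‖ ≤ c * (∑' m : Fin d → ℤ, latticeWeight m) * ∑' j, ‖u j‖ ^ 2 :=
  (norm_tsum_le_tsum_norm (norm_form_le hc hb hu).1).trans (norm_form_le hc hb hu).2

section Composition

variable {a b : (Fin d → ℤ) → (Fin d → ℤ) → ℂ} {c c' : ℝ} {u : (Fin d → ℤ) → ℂ}

lemma form_comp_middle (hc : 0 ≤ c)
    (hc' : 0 ≤ c') (ha : ∀ j k, ‖a j k‖ ≤ c * latticeWeight (j - k))
    (hb : ∀ j k, ‖b j k‖ ≤ c' * latticeWeight (j - k)) (hu : Summable fun j => ‖u j‖ ^ 2) :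
    form (fun j m => ∑' k, a j k * b k m) u =
      ∑' x : ((Fin d → ℤ) × (Fin d → ℤ)) × (Fin d → ℤ),
        a x.1.1 x.1.2 * b x.1.2 x.2 * u x.2 * star (u x.1.1) := by
  let e : ((Fin d → ℤ) × (Fin d → ℤ)) × (Fin d → ℤ) ≃ ((Fin d → ℤ) × (Fin d → ℤ)) × (Fin d → ℤ) :=
    ⟨fun x => ((x.1.1, x.2), x.1.2), fun x => ((x.1.1, x.2), x.1.2), fun _ => rfl, fun _ => rfl⟩
  have h := e.summable_iff.2 (norm_form_comp_le hc hc' ha hb hu).1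
  rw [← e.tsum_eq, ← (tsum_marginal h).2.2, form]
  refine tsum_congr fun x => ?_
  rw [← tsum_mul_right, ← tsum_mul_right]
  rfl

lemma form_comp_right (hc : 0 ≤ c)
    (hc' : 0 ≤ c') (ha : ∀ j k, ‖a j k‖ ≤ c * latticeWeight (j - k))
    (hb : ∀ j k, ‖b j k‖ ≤ c' * latticeWeight (j - k)) (hu : Summable fun j => ‖u j‖ ^ 2) :
    (Summable fun x : (Fin d → ℤ) × (Fin d → ℤ) =>
      ‖a x.1 x.2 * (∑' m, b x.2 m * u m) * star (u x.1)‖) ∧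
    ∑' x : (Fin d → ℤ) × (Fin d → ℤ), ‖a x.1 x.2 * (∑' m, b x.2 m * u m) * star (u x.1)‖ ≤
      c * c' * (∑' m : Fin d → ℤ, latticeWeight m) ^ 2 * ∑' j, ‖u j‖ ^ 2 ∧
    ∑' x : (Fin d → ℤ) × (Fin d → ℤ), a x.1 x.2 * (∑' m, b x.2 m * u m) * star (u x.1) =
      form (fun j m => ∑' k, a j k * b k m) u := by
  obtain ⟨h, h'⟩ := norm_form_comp_le hc hc' ha hb hu
  have h1 := tsum_marginal h
  have h2 (x : (Fin d → ℤ) × (Fin d → ℤ)) : a x.1 x.2 * (∑' m, b x.2 m * u m) * star (u x.1) =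
      ∑' m, a x.1 x.2 * b x.2 m * u m * star (u x.1) := by
    rw [← tsum_mul_left, ← tsum_mul_right]
    exact tsum_congr fun m => by ring
  simp only [h2]
  exact ⟨h1.1, h1.2.1.trans h', h1.2.2.trans (form_comp_middle hc hc' ha hb hu).symm⟩

lemma form_comp_left (hc : 0 ≤ c)
    (hc' : 0 ≤ c') (ha : ∀ j k, ‖a j k‖ ≤ c * latticeWeight (j - k))
    (hb : ∀ j k, ‖b j k‖ ≤ c' * latticeWeight (j - k)) (hu : Summable fun j => ‖u j‖ ^ 2) :
    (Summable fun x : (Fin d → ℤ) × (Fin d → ℤ) =>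
      ‖b x.1 x.2 * u x.2 * star (∑' m, star (a m x.1) * u m)‖) ∧
    ∑' x : (Fin d → ℤ) × (Fin d → ℤ), ‖b x.1 x.2 * u x.2 * star (∑' m, star (a m x.1) * u m)‖ ≤
      c * c' * (∑' m : Fin d → ℤ, latticeWeight m) ^ 2 * ∑' j, ‖u j‖ ^ 2 ∧
    ∑' x : (Fin d → ℤ) × (Fin d → ℤ), b x.1 x.2 * u x.2 * star (∑' m, star (a m x.1) * u m) =
      form (fun j m => ∑' k, a j k * b k m) u := by
  let e : ((Fin d → ℤ) × (Fin d → ℤ)) × (Fin d → ℤ) ≃ ((Fin d → ℤ) × (Fin d → ℤ)) × (Fin d → ℤ) :=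
    ⟨fun x => ((x.2, x.1.1), x.1.2), fun x => ((x.1.2, x.2), x.1.1), fun _ => rfl, fun _ => rfl⟩
  obtain ⟨h, h'⟩ := norm_form_comp_le hc hc' ha hb hu
  have he := e.summable_iff.2 h
  have h1 := tsum_marginal he
  have h2 (x : (Fin d → ℤ) × (Fin d → ℤ)) :
      b x.1 x.2 * u x.2 * star (∑' m, star (a m x.1) * u m) =
      ∑' m, a m x.1 * b x.1 x.2 * u x.2 * star (u m) := by
    rw [tsum_star, ← tsum_mul_left]
    refine tsum_congr fun m => ?_
    rw [star_mul', star_star]; ring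
  simp only [h2]
  refine ⟨h1.1, h1.2.1.trans ((e.tsum_eq fun x =>
    ‖a x.1.1 x.1.2 * b x.1.2 x.2 * u x.2 * star (u x.1.1)‖).trans_le h'), h1.2.2.trans ?_⟩
  rw [form_comp_middle hc hc' ha hb hu]
  exact e.tsum_eq fun x => a x.1.1 x.1.2 * b x.1.2 x.2 * u x.2 * star (u x.1.1)

end Composition

lemma form_add {a b : (Fin d → ℤ) → (Fin d → ℤ) → ℂ} {c c' : ℝ} (hc : 0 ≤ c)
    (hc' : 0 ≤ c') (ha : ∀ j k, ‖a j k‖ ≤ c * latticeWeight (j - k))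
    (hb : ∀ j k, ‖b j k‖ ≤ c' * latticeWeight (j - k)) {u : (Fin d → ℤ) → ℂ}
    (hu : Summable fun j => ‖u j‖ ^ 2) :
    form (fun j k => a j k + b j k) u = form a u + form b u := by
  rw [form, form, form, ← (norm_form_le hc ha hu).1.of_norm.tsum_add
    (norm_form_le hc' hb hu).1.of_norm]
  exact tsum_congr fun x => by ring

namespace SymbolRing

lemma form_entry_add (A B : SymbolRing d) (p : Param) (t : ℝ) {u : (Fin d → ℤ) → ℂ}
    (hu : Summable fun j => ‖u j‖ ^ 2) :
    form ((A + B).entry p t) u = form (A.entry p t) u + form (B.entry p t) u := by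
  obtain ⟨c, hc, h⟩ := A.exists_entry_le_latticeWeight
  obtain ⟨c', hc', h'⟩ := B.exists_entry_le_latticeWeight
  exact form_add hc hc' (h p t) (h' p t) hu

lemma form_entry_one (p : Param) (t : ℝ) {u : (Fin d → ℤ) → ℂ}
    (hu : Summable fun j => ‖u j‖ ^ 2) :
    form ((1 : SymbolRing d).entry p t) u = ((∑' j, ‖u j‖ ^ 2 : ℝ) : ℂ) := by
  obtain ⟨c, hc, h⟩ := (1 : SymbolRing d).exists_entry_le_latticeWeight
  rw [form, (norm_form_le hc (h p t) hu).1.of_norm.tsum_prod, Complex.ofReal_tsum]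
  refine tsum_congr fun j => ?_
  rw [tsum_eq_single j fun k hk => by simp [entry_one, hk.symm]]
  simp [entry_one, Complex.mul_conj, Complex.normSq_eq_norm_sq]

end SymbolRing

section Energy

variable {μ : (Fin d → ℤ) → ℝ} {A A' R Vp Vm : SymbolRing d}

/-- The derivative of the energy density, up to a factor `-i`. -/
noncomputable def energyRate (A A' V : SymbolRing d) (p : Param) (t : ℝ) (u : (Fin d → ℤ) → ℂ)
    (x : (Fin d → ℤ) × (Fin d → ℤ)) : ℂ :=
  A'.entry p t x.1 x.2 * u x.2 * star (u x.1)
    + A.entry p t x.1 x.2 * (∑' m, V.entry p t x.2 m * u m) * star (u x.1)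
    - A.entry p t x.1 x.2 * u x.2 * star (∑' m, V.entry p t x.1 m * u m)

lemma energyRate_summable (hA' : A' = Vm * A - A * Vp + R)
    (hV : ∀ p t j m, Vm.entry p t m j = star (Vp.entry p t j m)) :
    ∃ B : ℝ, 0 ≤ B ∧ ∀ p t (u : (Fin d → ℤ) → ℂ), (Summable fun j => ‖u j‖ ^ 2) →
      (Summable fun x => ‖energyRate A A' Vp p t u x‖) ∧
      ∑' x, ‖energyRate A A' Vp p t u x‖ ≤ B * ∑' j, ‖u j‖ ^ 2 ∧
      ∑' x, energyRate A A' Vp p t u x = form (R.entry p t) u := by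
  obtain ⟨a, ha0, ha⟩ := A.exists_entry_le_latticeWeight
  obtain ⟨a', ha0', ha'⟩ := A'.exists_entry_le_latticeWeight
  obtain ⟨v, hv0, hv⟩ := Vp.exists_entry_le_latticeWeight
  obtain ⟨v', hv0', hv'⟩ := Vm.exists_entry_le_latticeWeight
  set S := ∑' m : Fin d → ℤ, latticeWeight m with hS
  have hS0 : 0 ≤ S := tsum_nonneg latticeWeight_nonneg
  refine ⟨a' * S + a * v * S ^ 2 + v' * a * S ^ 2, by positivity, fun p t u hu => ?_⟩
  obtain ⟨h1, h1'⟩ := norm_form_le ha0' (ha' p t) hu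
  obtain ⟨h2, h2', h2''⟩ := form_comp_right ha0 hv0 (ha p t) (hv p t) hu
  obtain ⟨h3, h3', h3''⟩ := form_comp_left hv0' ha0 (hv' p t) (ha p t) hu
  simp only [hV, star_star] at h3 h3' h3''
  have hle (x) : ‖energyRate A A' Vp p t u x‖ ≤ ‖A'.entry p t x.1 x.2 * u x.2 * star (u x.1)‖
      + ‖A.entry p t x.1 x.2 * (∑' m, Vp.entry p t x.2 m * u m) * star (u x.1)‖
      + ‖A.entry p t x.1 x.2 * u x.2 * star (∑' m, Vp.entry p t x.1 m * u m)‖ :=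
    (norm_sub_le _ _).trans (add_le_add_left (norm_add_le _ _) _)
  have hs := Summable.of_nonneg_of_le (fun _ => norm_nonneg _) hle ((h1.add h2).add h3)
  refine ⟨hs, ?_, ?_⟩
  · refine (hs.tsum_le_tsum hle ((h1.add h2).add h3)).trans ?_
    rw [(h1.add h2).tsum_add h3, h1.tsum_add h2, ← hS] at *
    linarith
  · have e1 : ∑' x, energyRate A A' Vp p t u x = form (A'.entry p t) u
        + form ((A * Vp).entry p t) u - form ((Vm * A).entry p t) u := by
      simp only [energyRate]
      rw [(h1.of_norm.add h2.of_norm).tsum_sub h3.of_norm, h1.of_norm.tsum_add h2.of_norm,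
        h2'', h3'']
      simp only [← hV]
      rfl
    have e2 : A' + A * Vp = Vm * A + R := by rw [hA']; abel
    rw [e1, ← SymbolRing.form_entry_add _ _ _ _ hu, e2, SymbolRing.form_entry_add _ _ _ _ hu]
    ring

lemma hasDerivAt_energyDensity (hH : SymbolRing.IsHeisenberg μ A A') (p : Param)
    {u : ℝ → (Fin d → ℤ) → ℂ} {t : ℝ} (hu : ∀ j, HasDerivAt (fun s => u s j)
      (-Complex.I * (μ j * u t j + ∑' k, Vp.entry p t j k * u t k)) t)
    (x : (Fin d → ℤ) × (Fin d → ℤ)) :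
    HasDerivAt (fun s => A.entry p s x.1 x.2 * u s x.2 * star (u s x.1))
      (-Complex.I * energyRate A A' Vp p t (u t) x) t := by
  have h := ((A.hasDerivAt_entry p x.1 x.2 t).mul (hu x.2)).mul (hu x.1).star
  convert! h using 1
  rw [Pi.mul_apply, energyRate, hH p t x.1 x.2, star_mul', star_add, star_mul']
  simp only [star_neg, Complex.star_def, Complex.conj_I, Complex.conj_ofReal]
  ring

/-- A priori bound for solutions, uniformly in a large parameter. -/
theorem exists_energy_bound {K : ℕ} (hA : A - 1 ∈ SymbolRing.order d 1)
    (hR : R ∈ SymbolRing.order d K) (hH : SymbolRing.IsHeisenberg μ A A')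
    (hA' : A' = Vm * A - A * Vp + R)
    (hV : ∀ p t j m, Vm.entry p t m j = star (Vp.entry p t j m)) :
    ∃ C : ℝ, 1 ≤ C ∧ ∀ (p : Param) (T : ℝ), C ≤ p → 0 ≤ T → C * T ≤ (p : ℝ) ^ K →
      ∀ u : ℝ → (Fin d → ℤ) → ℂ, (∀ t, Summable fun j => ‖u t j‖ ^ 2) →
      (∀ j t, HasDerivAt (fun s => u s j)
        (-Complex.I * (μ j * u t j + ∑' k, Vp.entry p t j k * u t k)) t) →
      BddAbove ((fun t => ∑' j, ‖u t j‖ ^ 2) '' Set.Icc (-T) T) →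
      ∀ t ∈ Set.Icc (-T) T, ∑' j, ‖u t j‖ ^ 2 ≤ 6 * ∑' j, ‖u 0 j‖ ^ 2 := by
  obtain ⟨a, ha0, ha⟩ := SymbolRing.exists_norm_entry_le hA
  obtain ⟨ρ, hρ0, hρ⟩ := SymbolRing.exists_norm_entry_le hR
  obtain ⟨c, hc0, hc⟩ := A.exists_entry_le_latticeWeight
  obtain ⟨B, hB0, hB⟩ := energyRate_summable hA' hV
  set S := ∑' m : Fin d → ℤ, latticeWeight m with hS
  have hS0 : 0 ≤ S := tsum_nonneg latticeWeight_nonneg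
  refine ⟨1 + 2 * a * S + 4 * ρ * S, le_add_of_le_of_nonneg
    (le_add_of_nonneg_right (by positivity)) (by positivity),
    fun p T hp hT hTp u hu hode hbdd => ?_⟩
  have hp0 := param_pos p
  set y : ℝ → ℝ := fun t => ∑' j, ‖u t j‖ ^ 2 with hy
  have hy0 (t) : 0 ≤ y t := tsum_nonneg fun _ => sq_nonneg _
  set Y := sSup (y '' Set.Icc (-T) T) with hY
  have hyY (s) (hs : s ∈ Set.Icc (-T) T) : y s ≤ Y := le_csSup hbdd ⟨s, hs, rfl⟩
  have h0mem : (0 : ℝ) ∈ Set.Icc (-T) T := ⟨by linarith, hT⟩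
  have hY0 : 0 ≤ Y := (hy0 0).trans (hyY 0 h0mem)
  have hρS : 0 ≤ ρ * S := mul_nonneg hρ0 hS0
  have haS : 0 ≤ a * S := mul_nonneg ha0 hS0
  have hclose (t) : ‖form (A.entry p t) (u t) - y t‖ ≤ y t / 2 := by
    have e : form (A.entry p t) (u t) = form ((A - 1).entry p t) (u t)
        + form ((1 : SymbolRing d).entry p t) (u t) := by
      rw [← SymbolRing.form_entry_add _ _ _ _ (hu t), sub_add_cancel]
    rw [e, SymbolRing.form_entry_one _ _ (hu t), add_sub_cancel_right]
    refine (norm_form_le_of_le (by positivity) (ha p t) (hu t)).trans ?_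
    rw [div_eq_inv_mul]
    refine mul_le_mul_of_nonneg_right ?_ (hy0 t)
    rw [pow_one, ← hS, mul_right_comm, mul_inv_le_iff₀ hp0]
    linarith
  have hgrow (t) (ht : t ∈ Set.Icc (-T) T) :
      ‖form (A.entry p t) (u t) - form (A.entry p 0) (u 0)‖ ≤ Y / 4 := by
    have hsub (s) (hs : s ∈ Set.uIoc 0 t) : s ∈ Set.Icc (-T) T :=
      (Set.uIcc_subset_Icc h0mem ht) (Set.uIoc_subset_uIcc hs)
    have h := norm_tsum_sub_tsum_le (a := 0) (b := t) (B := B * Y)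
      (κ := ρ * ((p : ℝ) ^ K)⁻¹ * S * Y)
      (fun x s => hasDerivAt_energyDensity hH p (fun j => hode j s) x)
      (fun s => (norm_form_le hc0 (hc p s) (hu s)).1.of_norm)
      (fun s _ => by
        simpa only [norm_mul, norm_neg, Complex.norm_I, one_mul] using (hB p s (u s) (hu s)).1)
      (fun s hs => by
        simp only [norm_mul, norm_neg, Complex.norm_I, one_mul]
        exact (hB p s (u s) (hu s)).2.1.trans (mul_le_mul_of_nonneg_left (hyY s (hsub s hs)) hB0))
      (fun s hs => by
        rw [tsum_mul_left, (hB p s (u s) (hu s)).2.2, norm_mul, norm_neg, Complex.norm_I, one_mul]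
        refine (norm_form_le_of_le (by positivity) (hρ p s) (hu s)).trans ?_
        exact mul_le_mul_of_nonneg_left (hyY s (hsub s hs)) (by positivity))
    refine h.trans ?_
    have hT' : |t - 0| ≤ T := by rw [sub_zero]; exact abs_le.2 ht
    calc ρ * ((p : ℝ) ^ K)⁻¹ * S * Y * |t - 0| ≤ ρ * ((p : ℝ) ^ K)⁻¹ * S * Y * T := by gcongr
      _ = (4 * ρ * S * T) * ((p : ℝ) ^ K)⁻¹ * (Y / 4) := by ring
      _ ≤ 1 * (Y / 4) := by
          gcongr
          rw [mul_inv_le_iff₀ (by positivity)]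
          nlinarith
      _ = Y / 4 := one_mul _
  have hstep (t) (ht : t ∈ Set.Icc (-T) T) : y t ≤ 3 * y 0 + Y / 2 := by
    have h1 := hclose t
    have h2 := hclose 0
    have h3 := hgrow t ht
    have h4 : ‖((y t : ℂ))‖ ≤ ‖form (A.entry p t) (u t) - y t‖
        + ‖form (A.entry p t) (u t) - form (A.entry p 0) (u 0)‖
        + ‖form (A.entry p 0) (u 0) - y 0‖ + ‖((y 0 : ℂ))‖ := by
      have e : (y t : ℂ) = -(form (A.entry p t) (u t) - y t)
        + (form (A.entry p t) (u t) - form (A.entry p 0) (u 0))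
        + (form (A.entry p 0) (u 0) - y 0) + y 0 := by ring
      conv_lhs => rw [e]
      refine (norm_add_le _ _).trans (add_le_add_left ((norm_add_le _ _).trans
        (add_le_add_left ((norm_add_le _ _).trans (le_of_eq ?_)) _)) _)
      rw [norm_neg]
    rw [Complex.norm_real, Complex.norm_real, Real.norm_of_nonneg (hy0 _),
      Real.norm_of_nonneg (hy0 _)] at h4
    linarith
  have hYle : Y ≤ 3 * y 0 + Y / 2 := csSup_le ⟨_, 0, h0mem, rfl⟩ (by
    rintro _ ⟨s, hs, rfl⟩; exact hstep s hs)
  intro t ht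
  have := hyY t ht
  change y t ≤ 6 * y 0
  linarith

end Energy

/-! ### Integer vectors -/

/-- The embedding of `ℤ^d` into `ℝ^d`. -/
def toReal : (Fin d → ℤ) →+ (Fin d → ℝ) where
  toFun x i := x i
  map_zero' := by ext; simp
  map_add' x y := by ext; simp

@[simp] lemma toReal_apply (x : Fin d → ℤ) (i : Fin d) : toReal x i = x i := rfl

lemma norm_toReal (x : Fin d → ℤ) : ‖toReal x‖ = ‖x‖ := by
  simp only [Pi.norm_def]
  congr 2

lemma abs_dotProduct_le (x y : Fin d → ℝ) : |x ⬝ᵥ y| ≤ d * ‖x‖ * ‖y‖ := by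
  calc |x ⬝ᵥ y| ≤ ∑ i, |x i * y i| := Finset.abs_sum_le_sum_abs _ _
    _ ≤ ∑ _i : Fin d, ‖x‖ * ‖y‖ := by
        refine Finset.sum_le_sum fun i _ => ?_
        rw [abs_mul]
        exact mul_le_mul (norm_le_pi_norm x i) (norm_le_pi_norm y i) (abs_nonneg _) (norm_nonneg _)
    _ = d * ‖x‖ * ‖y‖ := by simp [mul_assoc]

/-- Cramer's rule for the Gram matrix: the coordinates of a vector in a basis of integer vectors
are controlled polynomially by the size of the basis. -/
lemma abs_coord_le {n : Type*} [Fintype n] (f : n → Fin d → ℤ)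
    (hf : LinearIndependent ℝ fun i => toReal (f i)) {ρ : ℝ} (hρ : 1 ≤ ρ) (hfρ : ∀ i, ‖f i‖ ≤ ρ)
    (c : n → ℝ) (i : n) :
    |c i| ≤ d.factorial * ((d + 1) * ρ ^ 2) ^ d * (d * (d * ρ)) * ‖∑ k, c k • toReal (f k)‖ := by
  classical
  have hcard : Fintype.card n ≤ d := by
    simpa using hf.fintype_card_le_finrank
  set y := ∑ k, c k • toReal (f k) with hy
  set G : Matrix n n ℤ := Matrix.of fun i k => f i ⬝ᵥ f k with hG
  set H : Matrix n n ℝ := G.map (Int.castRingHom ℝ) with hH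
  have hHik (i k) : H i k = toReal (f i) ⬝ᵥ toReal (f k) := by
    simp [hH, hG, dotProduct]
  have hHc (c : n → ℝ) : H.mulVec c = fun k => toReal (f k) ⬝ᵥ ∑ i, c i • toReal (f i) := by
    ext k
    simp only [Matrix.mulVec, dotProduct_sum, dotProduct_smul, ← hHik, smul_eq_mul]
    exact Finset.sum_congr rfl fun i _ => mul_comm _ _
  have hdet : H.det ≠ 0 := by
    intro h0
    obtain ⟨v, hv, hv0⟩ := Matrix.exists_mulVec_eq_zero_iff.2 h0
    apply hv
    have h1 : (∑ i, v i • toReal (f i)) ⬝ᵥ (∑ i, v i • toReal (f i)) = 0 := by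
      rw [sum_dotProduct]
      refine Finset.sum_eq_zero fun k _ => ?_
      rw [smul_dotProduct, ← congrFun (hHc v) k, hv0, Pi.zero_apply, smul_zero]
    exact funext (Fintype.linearIndependent_iff.1 hf v (dotProduct_self_eq_zero.1 h1))
  have hdet1 : 1 ≤ |H.det| := by
    have e : H.det = (G.det : ℝ) := ((Int.castRingHom ℝ).map_det G).symm
    rw [e] at hdet ⊢
    exact_mod_cast Int.one_le_abs (by exact_mod_cast hdet)
  have hM : 1 ≤ ((d : ℝ) + 1) * ρ ^ 2 := by
    have : 1 ≤ ρ ^ 2 := one_le_pow₀ hρ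
    nlinarith [(Nat.cast_nonneg d : (0 : ℝ) ≤ d)]
  have hentry (i k) : |H i k| ≤ (d + 1) * ρ ^ 2 := by
    rw [hHik]
    refine (abs_dotProduct_le _ _).trans ?_
    rw [norm_toReal, norm_toReal]
    have := mul_le_mul (hfρ i) (hfρ k) (norm_nonneg _) (by linarith)
    nlinarith [(Nat.cast_nonneg d : (0 : ℝ) ≤ d),
      mul_nonneg (norm_nonneg (f i)) (norm_nonneg (f k))]
  have hadj (i k) : |H.adjugate i k| ≤ d.factorial * ((d + 1) * ρ ^ 2) ^ d := by
    rw [Matrix.adjugate_apply]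
    have h := Matrix.det_le (A := H.updateRow k (Pi.single i 1)) (abv := AbsoluteValue.abs)
      (x := (d + 1) * ρ ^ 2) (fun a b => by
        rw [Matrix.updateRow_apply]
        split_ifs
        · rw [AbsoluteValue.abs_apply, Pi.single_apply]
          split_ifs <;> simp <;> linarith
        · exact hentry a b)
    rw [AbsoluteValue.abs_apply, nsmul_eq_mul] at h
    refine h.trans ?_
    gcongr
  have hcoord : H.det * c i = ∑ k, H.adjugate i k * (toReal (f k) ⬝ᵥ y) := by
    have h := congrArg (fun M => Matrix.mulVec M c i) H.adjugate_mul
    simp only [← Matrix.mulVec_mulVec, hHc, Matrix.smul_mulVec, Matrix.one_mulVec, Pi.smul_apply,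
      smul_eq_mul] at h
    exact h.symm
  have hk (k) : |H.adjugate i k * (toReal (f k) ⬝ᵥ y)|
      ≤ d.factorial * ((d + 1) * ρ ^ 2) ^ d * (d * ρ * ‖y‖) := by
    rw [abs_mul]
    refine mul_le_mul (hadj i k) ?_ (abs_nonneg _) (by positivity)
    refine (abs_dotProduct_le _ _).trans ?_
    rw [norm_toReal]
    have := hfρ k
    gcongr
  calc |c i| ≤ |H.det| * |c i| := le_mul_of_one_le_left (abs_nonneg _) hdet1
    _ = |∑ k, H.adjugate i k * (toReal (f k) ⬝ᵥ y)| := by rw [← abs_mul, hcoord]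
    _ ≤ ∑ k, |H.adjugate i k * (toReal (f k) ⬝ᵥ y)| := Finset.abs_sum_le_sum_abs _ _
    _ ≤ ∑ _k : n, d.factorial * ((d + 1) * ρ ^ 2) ^ d * (d * ρ * ‖y‖) :=
        Finset.sum_le_sum fun k _ => hk k
    _ = Fintype.card n * (d.factorial * ((d + 1) * ρ ^ 2) ^ d * (d * ρ * ‖y‖)) := by simp
    _ ≤ d * (d.factorial * ((d + 1) * ρ ^ 2) ^ d * (d * ρ * ‖y‖)) := by
        gcongr
    _ = _ := by ring

/-- A linear functional bounded on a set of integer vectors is bounded on their span, with a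
polynomial loss. -/
lemma exists_abs_functional_le (d : ℕ) : ∃ C : ℝ, 0 ≤ C ∧ ∀ (ρ : ℝ), 1 ≤ ρ →
    ∀ (F : Set (Fin d → ℤ)), (∀ f ∈ F, ‖f‖ ≤ ρ) → ∀ (φ : (Fin d → ℝ) →ₗ[ℝ] ℝ) (m : ℝ), 0 ≤ m →
    (∀ f ∈ F, |φ (toReal f)| ≤ m) → ∀ y ∈ Submodule.span ℝ (toReal '' F),
    |φ y| ≤ C * ρ ^ (2 * d + 1) * m * ‖y‖ := by
  refine ⟨d * (d.factorial * (d + 1) ^ d * (d * d)), by positivity, ?_⟩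
  intro ρ hρ F hF φ m hm hφ y hy
  obtain ⟨t, htF, htspan, htind⟩ := exists_linearIndependent ℝ (toReal '' F)
  have : Fintype t := htind.setFinite.fintype
  choose f hfF hf using fun x : t => htF x.2
  have hfeq : (fun x : t => toReal (f x)) = ((↑) : t → Fin d → ℝ) := funext hf
  have hind : LinearIndependent ℝ fun x : t => toReal (f x) := by rw [hfeq]; exact htind
  have hcard : Fintype.card t ≤ d := by simpa using hind.fintype_card_le_finrank
  rw [← htspan, ← Subtype.range_coe (s := t), ← hfeq,
    Submodule.mem_span_range_iff_exists_fun] at hy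
  obtain ⟨c, rfl⟩ := hy
  have hc := abs_coord_le f hind hρ (fun i => hF _ (hfF i)) c
  set Y := ‖∑ k, c k • toReal (f k)‖
  rw [map_sum]
  calc |∑ k, φ (c k • toReal (f k))| ≤ ∑ k, |φ (c k • toReal (f k))| :=
        Finset.abs_sum_le_sum_abs _ _
    _ ≤ ∑ _k : t, d.factorial * ((d + 1) * ρ ^ 2) ^ d * (d * (d * ρ)) * Y * m := by
        refine Finset.sum_le_sum fun k _ => ?_
        rw [map_smul, smul_eq_mul, abs_mul]
        exact mul_le_mul (hc k) (hφ _ (hfF k)) (abs_nonneg _) (by positivity)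
    _ = Fintype.card t * (d.factorial * ((d + 1) * ρ ^ 2) ^ d * (d * (d * ρ)) * Y * m) := by simp
    _ ≤ d * (d.factorial * ((d + 1) * ρ ^ 2) ^ d * (d * (d * ρ)) * Y * m) := by gcongr
    _ = _ := by rw [mul_pow, ← pow_mul, pow_succ]; ring

/-- An injective finite sequence in a ball of `ℤ^d` is short. -/
lemma length_le_of_injOn {L : ℕ} {j : ℕ → Fin d → ℤ} (hj : Set.InjOn j {i | i ≤ L}) {ρ : ℝ}
    (hρ : 1 ≤ ρ) (hjρ : ∀ i ≤ L, ‖j i - j 0‖ ≤ ρ) : (L : ℝ) ≤ (3 * ρ) ^ d := by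
  set N := ⌊ρ⌋₊
  have hN : (N : ℝ) ≤ ρ := Nat.floor_le (by linarith)
  have h := Finset.card_le_card_of_injOn (s := Finset.range (L + 1))
    (t := Finset.Icc (j 0 - fun _ => (N : ℤ)) (j 0 + fun _ => (N : ℤ))) j
    (fun i hi => by
      have hi' : i ≤ L := Nat.lt_succ_iff.1 (Finset.mem_range.1 (Finset.mem_coe.1 hi))
      have h1 (a) : |j i a - j 0 a| ≤ (N : ℤ) := by
        have h2 := (norm_le_pi_norm (j i - j 0) a).trans (hjρ i hi')
        rw [Pi.sub_apply, Int.norm_eq_abs, ← Int.cast_abs, Int.abs_eq_natAbs,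
          Int.cast_natCast] at h2
        rw [Int.abs_eq_natAbs]
        exact_mod_cast Nat.le_floor h2
      refine Finset.mem_coe.2 (Finset.mem_Icc.2 ⟨fun a => ?_, fun a => ?_⟩) <;>
        have := abs_le.1 (h1 a) <;> simp <;> omega)
    (hj.mono fun i hi => Nat.lt_succ_iff.1 (Finset.mem_range.1 (Finset.mem_coe.1 hi)))
  rw [Finset.card_range, Pi.card_Icc] at h
  have h2 : ∀ a : Fin d, (Finset.Icc ((j 0 - fun _ => (N : ℤ) : Fin d → ℤ) a)
      ((j 0 + fun _ => (N : ℤ) : Fin d → ℤ) a)).card = 2 * N + 1 := fun a => by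
    rw [Int.card_Icc, Pi.sub_apply, Pi.add_apply]; omega
  rw [Finset.prod_congr rfl fun a _ => h2 a, Finset.prod_const, Finset.card_univ,
    Fintype.card_fin] at h
  calc (L : ℝ) ≤ ((L + 1 : ℕ) : ℝ) := by push_cast; linarith
    _ ≤ (((2 * N + 1) ^ d : ℕ) : ℝ) := by exact_mod_cast h
    _ = (2 * N + 1) ^ d := by push_cast; ring
    _ ≤ (3 * ρ) ^ d := by gcongr; linarith

/-! ### Separation of clusters -/

/-- The bilinear form `⟨W x, W y⟩`, as a functional of `y`. -/
def polar (W : Matrix (Fin d) (Fin d) ℝ) (x : Fin d → ℝ) : (Fin d → ℝ) →ₗ[ℝ] ℝ where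
  toFun y := W.mulVec x ⬝ᵥ W.mulVec y
  map_add' y z := by rw [Matrix.mulVec_add, dotProduct_add]
  map_smul' a y := by rw [Matrix.mulVec_smul, dotProduct_smul]; rfl

lemma polar_sub_left (W : Matrix (Fin d) (Fin d) ℝ) (x y z : Fin d → ℝ) :
    polar W (x - y) z = polar W x z - polar W y z := by
  simp [polar, Matrix.mulVec_sub, sub_dotProduct]

lemma polar_comm (W : Matrix (Fin d) (Fin d) ℝ) (x y : Fin d → ℝ) :
    polar W x y = polar W y x := dotProduct_comm (W.mulVec x) (W.mulVec y)

lemma mu_eq_polar (W : Matrix (Fin d) (Fin d) ℝ) (j : Fin d → ℤ) :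
    mu W j = polar W (toReal j) (toReal j) :=
  Finset.sum_congr rfl fun _ _ => sq _

lemma mu_nonneg (W : Matrix (Fin d) (Fin d) ℝ) (j : Fin d → ℤ) : 0 ≤ mu W j :=
  Finset.sum_nonneg fun _ _ => sq_nonneg _

lemma two_mul_polar_sub (W : Matrix (Fin d) (Fin d) ℝ) (j k : Fin d → ℤ) :
    2 * polar W (toReal j) (toReal (k - j)) = mu W k - mu W j - mu W (k - j) := by
  simp only [mu_eq_polar, map_sub, polar_sub_left]
  rw [polar_comm W (toReal k) (toReal j)]
  ring

lemma exists_mu_equiv {W : Matrix (Fin d) (Fin d) ℝ} (hW : IsUnit W.det) :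
    ∃ c : ℝ, 1 ≤ c ∧ ∀ j : Fin d → ℤ, ‖j‖ ^ 2 ≤ c * mu W j ∧ mu W j ≤ c * ‖j‖ ^ 2 := by
  set T := LinearMap.toContinuousLinearMap (Matrix.toLin' W)
  set S := LinearMap.toContinuousLinearMap (Matrix.toLin' W⁻¹)
  refine ⟨1 + ‖S‖ ^ 2 + d * ‖T‖ ^ 2, ?_, fun j => ?_⟩
  · have : 0 ≤ (d : ℝ) * ‖T‖ ^ 2 := by positivity
    nlinarith [sq_nonneg ‖S‖]
  set x := toReal j with hx
  have hmu : mu W j = W.mulVec x ⬝ᵥ W.mulVec x := mu_eq_polar W j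
  have hS : ‖x‖ ≤ ‖S‖ * ‖W.mulVec x‖ := by
    have h := S.le_opNorm (W.mulVec x)
    have e : S (W.mulVec x) = x := by
      change Matrix.toLin' W⁻¹ (W.mulVec x) = x
      rw [Matrix.toLin'_apply, Matrix.mulVec_mulVec, Matrix.nonsing_inv_mul _ hW, Matrix.one_mulVec]
    rwa [e] at h
  have hT : ‖W.mulVec x‖ ≤ ‖T‖ * ‖x‖ := T.le_opNorm x
  have h1 : ‖W.mulVec x‖ ^ 2 ≤ mu W j := by
    have h0 := mu_nonneg W j
    refine (Real.le_sqrt (norm_nonneg _) h0).1 ((pi_norm_le_iff_of_nonneg (Real.sqrt_nonneg _)).2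
      fun i => Real.le_sqrt_of_sq_le ?_)
    rw [Real.norm_eq_abs, sq_abs]
    exact Finset.single_le_sum (f := fun i => (W.mulVec x i) ^ 2) (fun _ _ => sq_nonneg _)
      (Finset.mem_univ i)
  have h2 : mu W j ≤ d * ‖W.mulVec x‖ ^ 2 := by
    rw [hmu, sq, ← mul_assoc]
    exact (le_abs_self _).trans (abs_dotProduct_le _ _)
  rw [hx, norm_toReal, ← hx] at hS hT
  have h3 := mu_nonneg W j
  have h4 : ‖j‖ ^ 2 ≤ ‖S‖ ^ 2 * ‖W.mulVec x‖ ^ 2 := by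
    rw [← mul_pow]; exact pow_le_pow_left₀ (norm_nonneg _) hS 2
  have h5 : ‖W.mulVec x‖ ^ 2 ≤ ‖T‖ ^ 2 * ‖j‖ ^ 2 := by
    rw [← mul_pow]; exact pow_le_pow_left₀ (norm_nonneg _) hT 2
  have h6 := mul_le_mul_of_nonneg_left h1 (sq_nonneg ‖S‖)
  have h7 := mul_le_mul_of_nonneg_left h5 (Nat.cast_nonneg (α := ℝ) d)
  have h8 : 0 ≤ (d * ‖T‖ ^ 2) * mu W j := by positivity
  have h9 : 0 ≤ ‖S‖ ^ 2 * ‖j‖ ^ 2 := by positivity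
  have h10 := sq_nonneg ‖j‖
  constructor <;> nlinarith

/-- A sequence of lattice points with small jumps and small jumps of `μ`. -/
def IsClusterChain (μ : (Fin d → ℤ) → ℝ) (Γ : ℝ) (L : ℕ) (j : ℕ → Fin d → ℤ) : Prop :=
  ∀ i < L, ‖j (i + 1) - j i‖ ≤ Γ ∧ |μ (j (i + 1)) - μ (j i)| ≤ Γ

namespace IsClusterChain

variable {μ : (Fin d → ℤ) → ℝ} {Γ : ℝ} {L : ℕ} {j : ℕ → Fin d → ℤ}

lemma displacement_le (h : IsClusterChain μ Γ L j) (p : ℕ) :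
    ∀ n : ℕ, p + n ≤ L → ‖j (p + n) - j p‖ ≤ n * Γ ∧ |μ (j (p + n)) - μ (j p)| ≤ n * Γ
  | 0, _ => by simp
  | n + 1, hn => by
    have h1 := displacement_le h p n (by omega)
    have h2 := h (p + n) (by omega)
    rw [← add_assoc]
    push_cast
    constructor
    · have := norm_sub_le_norm_sub_add_norm_sub (j (p + n + 1)) (j (p + n)) (j p)
      linarith
    · have := abs_sub_le (μ (j (p + n + 1))) (μ (j (p + n))) (μ (j p))
      linarith

lemma displacement_le' (h : IsClusterChain μ Γ L j) (hΓ : 0 ≤ Γ) {p q n : ℕ} (hp : p ≤ L)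
    (hq : q ≤ L) (hpq : p ≤ q + n) (hqp : q ≤ p + n) :
    ‖j q - j p‖ ≤ n * Γ ∧ |μ (j q) - μ (j p)| ≤ n * Γ := by
  rcases le_total p q with hle | hle
  · obtain ⟨m, rfl⟩ := Nat.exists_eq_add_of_le hle
    have hm : (m : ℝ) * Γ ≤ n * Γ := by gcongr; omega
    have := h.displacement_le p m hq
    exact ⟨this.1.trans hm, this.2.trans hm⟩
  · obtain ⟨m, rfl⟩ := Nat.exists_eq_add_of_le hle
    have hm : (m : ℝ) * Γ ≤ n * Γ := by gcongr; omega
    have := h.displacement_le q m hp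
    rw [norm_sub_rev, abs_sub_comm]
    exact ⟨this.1.trans hm, this.2.trans hm⟩

lemma shift (h : IsClusterChain μ Γ L j) {s n : ℕ} (hs : s + n ≤ L) :
    IsClusterChain μ Γ n fun i => j (s + i) := fun i hi => h (s + i) (by omega)

end IsClusterChain

lemma abs_polar_sub_le {W : Matrix (Fin d) (Fin d) ℝ} {c : ℝ} (hc1 : 1 ≤ c)
    (hc : ∀ j : Fin d → ℤ, mu W j ≤ c * ‖j‖ ^ 2) {ρ : ℝ} (hρ : 1 ≤ ρ) {j k : Fin d → ℤ}
    (h1 : ‖k - j‖ ≤ ρ) (h2 : |mu W k - mu W j| ≤ ρ) :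
    |polar W (toReal j) (toReal (k - j))| ≤ c * ρ ^ 2 := by
  have h3 := two_mul_polar_sub W j k
  have h4 := (hc (k - j)).trans
    (mul_le_mul_of_nonneg_left (pow_le_pow_left₀ (norm_nonneg _) h1 2) (by linarith))
  have h5 := mu_nonneg W (k - j)
  have h6 : ρ ≤ c * ρ ^ 2 := by nlinarith
  have h7 := abs_le.1 h2
  rw [abs_le]
  constructor <;> nlinarith

/-- Bourgain's separation lemma, in terms of the dimension spanned by the chain. -/
theorem exists_chain_length_le {W : Matrix (Fin d) (Fin d) ℝ} (hW : IsUnit W.det) (g : ℕ) :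
    ∃ C : ℝ, 1 ≤ C ∧ ∃ b : ℕ, ∀ (Γ : ℝ), 1 ≤ Γ → ∀ (L : ℕ) (j : ℕ → Fin d → ℤ),
      IsClusterChain (mu W) Γ L j → Set.InjOn j {i | i ≤ L} →
      ∀ G : Submodule ℝ (Fin d → ℝ), Module.finrank ℝ G ≤ g →
      (∀ i ≤ L, toReal (j i - j 0) ∈ G) → (L : ℝ) ≤ C * Γ ^ b := by
  induction g with
  | zero =>
    refine ⟨1, le_rfl, 0, fun Γ hΓ L j _ hinj G hG hjG => ?_⟩
    have hG0 : G = ⊥ := Submodule.finrank_eq_zero.1 (Nat.le_zero.1 hG)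
    have h := hjG L le_rfl
    rw [hG0, Submodule.mem_bot, ← norm_eq_zero, norm_toReal, norm_eq_zero, sub_eq_zero] at h
    have : L = 0 := hinj (Set.mem_ofPred.2 le_rfl) (Set.mem_ofPred.2 (Nat.zero_le L)) h
    simp [this]
  | succ g ih =>
    obtain ⟨C, hC, b, ih⟩ := ih
    obtain ⟨c, hc, hmu⟩ := exists_mu_equiv hW
    obtain ⟨k, hk0, hk⟩ := exists_abs_functional_le d
    set C' : ℝ := 4 * c ^ 2 * k + 1 with hC'
    have hC'1 : 1 ≤ C' := by
      have : 0 ≤ 4 * c ^ 2 * k := by positivity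
      linarith
    refine ⟨2 * C + (3 * (C' * (2 * C) ^ (2 * d + 3))) ^ d, ?_, b + ((b + 1) * (2 * d + 3)) * d,
      fun Γ hΓ L j hchain hinj G hG hjG => ?_⟩
    · have : 0 ≤ (3 * (C' * (2 * C) ^ (2 * d + 3))) ^ d := by positivity
      linarith
    set n := ⌊C * Γ ^ b⌋₊ + 1 with hn
    have hCΓ : 1 ≤ C * Γ ^ b := one_le_mul_of_one_le_of_one_le hC (one_le_pow₀ hΓ)
    have hn_gt : C * Γ ^ b < n := by
      rw [hn]; push_cast; exact Nat.lt_floor_add_one _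
    have hn_le : (n : ℝ) ≤ 2 * C * Γ ^ b := by
      have := Nat.floor_le (by linarith : 0 ≤ C * Γ ^ b)
      rw [hn]; push_cast; linarith
    rw [pow_add Γ]
    have hΓb : 1 ≤ Γ ^ b := one_le_pow₀ hΓ
    have hΓb' : 1 ≤ Γ ^ ((b + 1) * (2 * d + 3) * d) := one_le_pow₀ hΓ
    rcases lt_or_ge L n with hLn | hLn
    · calc (L : ℝ) ≤ n := by exact_mod_cast hLn.le
        _ ≤ 2 * C * Γ ^ b := hn_le
        _ ≤ (2 * C + (3 * (C' * (2 * C) ^ (2 * d + 3))) ^ d) * Γ ^ b := by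
            gcongr
            exact le_add_of_nonneg_right (by positivity)
        _ ≤ (2 * C + (3 * (C' * (2 * C) ^ (2 * d + 3))) ^ d)
            * (Γ ^ b * Γ ^ ((b + 1) * (2 * d + 3) * d)) := by
            gcongr
            exact le_mul_of_one_le_right (by positivity) hΓb'
    set ρ : ℝ := n * Γ with hρdef
    have hρ : 1 ≤ ρ := by nlinarith
    have hfun (p : ℕ) (hp : p ≤ L) (y) (hy : y ∈ G) :
        |polar W (toReal (j p)) y| ≤ k * ρ ^ (2 * d + 1) * (2 * c * ρ ^ 2) * ‖y‖ := by
      set s := min p (L - n) with hs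
      have hsL : s + n ≤ L := by omega
      have hsp : s ≤ p := min_le_left _ _
      have hps : p ≤ s + n := by omega
      set F : Set (Fin d → ℤ) := {x | ∃ i ≤ n, x = j (s + i) - j s} with hF
      have hle : Submodule.span ℝ (toReal '' F) ≤ G := by
        rw [Submodule.span_le]
        rintro _ ⟨_, ⟨i, hi, rfl⟩, rfl⟩
        have h := G.sub_mem (hjG (s + i) (by omega)) (hjG s (by omega))
        rwa [← map_sub, sub_sub_sub_cancel_right] at h
      have hspan : Submodule.span ℝ (toReal '' F) = G := by
        refine Submodule.eq_of_le_of_finrank_le hle (hG.trans (Nat.succ_le_of_lt ?_))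
        by_contra hlt
        refine absurd (ih Γ hΓ n (fun i => j (s + i)) (hchain.shift hsL) ?_ _ (not_lt.1 hlt) ?_)
          (not_le.2 hn_gt)
        · intro i hi i' hi' h
          have hi₁ : i ≤ n := hi
          have hi₂ : i' ≤ n := hi'
          exact Nat.add_left_cancel (hinj (Set.mem_ofPred.2 (by omega : s + i ≤ L))
            (Set.mem_ofPred.2 (by omega : s + i' ≤ L)) h)
        · exact fun i hi => Submodule.subset_span ⟨_, ⟨i, hi, rfl⟩, rfl⟩
      refine hk ρ hρ F ?_ _ _ (by positivity) ?_ y (hspan ▸ hy)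
      · rintro _ ⟨i, hi, rfl⟩
        exact (hchain.displacement_le' (by linarith) (by omega) (by omega) (by omega)
          (by omega)).1
      · rintro _ ⟨i, hi, rfl⟩
        have h1 := hchain.displacement_le' (by linarith) hp (by omega : s + i ≤ L)
          (by omega : p ≤ s + i + n) (by omega : s + i ≤ p + n)
        have h2 := hchain.displacement_le' (by linarith) hp (by omega : s ≤ L)
          (by omega : p ≤ s + n) (by omega : s ≤ p + n)
        have h3 := abs_polar_sub_le hc (fun j => (hmu j).2) hρ h1.1 h1.2
        have h4 := abs_polar_sub_le hc (fun j => (hmu j).2) hρ h2.1 h2.2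
        rw [← sub_sub_sub_cancel_right (j (s + i)) (j s) (j p), map_sub, map_sub]
        refine (abs_sub _ _).trans ?_
        linarith
    have hdist (p : ℕ) (hp : p ≤ L) : ‖j p - j 0‖ ≤ C' * ρ ^ (2 * d + 3) := by
      set y := j p - j 0 with hy
      have h1 := hfun p hp _ (hjG p hp)
      have h2 := hfun 0 (Nat.zero_le L) _ (hjG p hp)
      rw [norm_toReal, ← hy] at h1 h2
      have h3 : mu W y = polar W (toReal (j p)) (toReal y) - polar W (toReal (j 0)) (toReal y) := by
        rw [← polar_sub_left, ← map_sub, ← hy, mu_eq_polar]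
      have h4 : mu W y ≤ 2 * (k * ρ ^ (2 * d + 1) * (2 * c * ρ ^ 2) * ‖y‖) := by
        linarith [(abs_le.1 h1).2, (abs_le.1 h2).1]
      have h5 : ‖y‖ * ‖y‖ ≤ 4 * c ^ 2 * k * ρ ^ (2 * d + 3) * ‖y‖ := by
        calc ‖y‖ * ‖y‖ = ‖y‖ ^ 2 := (sq _).symm
          _ ≤ c * mu W y := (hmu y).1
          _ ≤ c * (2 * (k * ρ ^ (2 * d + 1) * (2 * c * ρ ^ 2) * ‖y‖)) := by gcongr
          _ = _ := by ring
      have h6 : ‖y‖ ≤ 4 * c ^ 2 * k * ρ ^ (2 * d + 3) := by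
        rcases (norm_nonneg y).eq_or_lt with h0 | h0
        · rw [← h0]; positivity
        · exact le_of_mul_le_mul_right h5 h0
      refine h6.trans ?_
      gcongr
      exact le_add_of_nonneg_right zero_le_one
    have hR : 1 ≤ C' * ρ ^ (2 * d + 3) := one_le_mul_of_one_le_of_one_le hC'1 (one_le_pow₀ hρ)
    calc (L : ℝ) ≤ (3 * (C' * ρ ^ (2 * d + 3))) ^ d := length_le_of_injOn hinj hR hdist
      _ ≤ (3 * (C' * (2 * C * Γ ^ b * Γ) ^ (2 * d + 3))) ^ d := by
          rw [hρdef]; gcongr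
      _ = (3 * (C' * (2 * C) ^ (2 * d + 3))) ^ d * Γ ^ ((b + 1) * (2 * d + 3) * d) := by
          rw [mul_assoc (2 * C), ← pow_succ, mul_pow (2 * C), ← mul_assoc C', ← mul_assoc 3,
            mul_pow _ ((Γ ^ (b + 1)) ^ (2 * d + 3)), ← pow_mul, ← pow_mul,
            mul_assoc (b + 1)]
      _ ≤ (2 * C + (3 * (C' * (2 * C) ^ (2 * d + 3))) ^ d)
            * (Γ ^ b * Γ ^ ((b + 1) * (2 * d + 3) * d)) := by
          gcongr
          · exact le_add_of_nonneg_left (by positivity)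
          · exact le_mul_of_one_le_left (by positivity) hΓb

/-- The graph joining lattice points which are close and have close values of `μ`. -/
def clusterGraph (μ : (Fin d → ℤ) → ℝ) (Γ : ℝ) : SimpleGraph (Fin d → ℤ) where
  Adj j k := j ≠ k ∧ ‖j - k‖ ≤ Γ ∧ |μ j - μ k| ≤ Γ
  symm := ⟨fun j k h => ⟨h.1.symm, by rw [norm_sub_rev]; exact h.2.1,
    by rw [abs_sub_comm]; exact h.2.2⟩⟩
  loopless := ⟨fun j h => h.1 rfl⟩

/-- Clusters have polynomially bounded diameter. -/
theorem exists_cluster_diam_le {W : Matrix (Fin d) (Fin d) ℝ} (hW : IsUnit W.det) :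
    ∃ C : ℝ, 1 ≤ C ∧ ∃ b : ℕ, ∀ (Γ : ℝ), 1 ≤ Γ → ∀ j k,
      (clusterGraph (mu W) Γ).Reachable j k → ‖j - k‖ ≤ C * Γ ^ b := by
  obtain ⟨C, hC, b, h⟩ := exists_chain_length_le hW d
  refine ⟨C, hC, b + 1, fun Γ hΓ j k hjk => ?_⟩
  obtain ⟨p, hp⟩ := hjk.exists_isPath
  have hchain : IsClusterChain (mu W) Γ p.length p.getVert := fun i hi => by
    have := p.adj_getVert_succ hi
    rw [norm_sub_rev, abs_sub_comm]
    exact this.2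
  have h1 := h Γ hΓ p.length p.getVert hchain hp.getVert_injOn ⊤ (by simp) (fun _ _ => trivial)
  have h2 := (hchain.displacement_le 0 p.length (by omega)).1
  rw [zero_add, p.getVert_length, p.getVert_zero] at h2
  rw [norm_sub_rev, pow_succ, ← mul_assoc]
  exact h2.trans (mul_le_mul_of_nonneg_right h1 (by linarith))

/-! ### Weights adapted to clusters -/

/-- The supremum over the cluster of `j` of `max (1 + ‖k‖) M`. -/
noncomputable def clusterSup (G : SimpleGraph (Fin d → ℤ)) (M : ℝ) (j : Fin d → ℤ) : ℝ :=
  sSup ((fun k => max (1 + ‖k‖) M) '' {k | G.Reachable j k})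

section ClusterSup

variable {G : SimpleGraph (Fin d → ℤ)} {M : ℝ}

lemma clusterSup_eq {j k : Fin d → ℤ} (h : G.Reachable j k) :
    clusterSup G M j = clusterSup G M k := by
  unfold clusterSup
  congr 2
  ext i
  exact ⟨fun hi => h.symm.trans hi, fun hi => h.trans hi⟩

lemma clusterSup_upper (hG : ∀ j k, G.Reachable j k → ‖j - k‖ ≤ M) (j : Fin d → ℤ) :
    2 * max (1 + ‖j‖) M ∈ upperBounds ((fun k => max (1 + ‖k‖) M) '' {k | G.Reachable j k}) := by
  rintro _ ⟨k, hk, rfl⟩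
  have h1 := hG j k hk
  have h2 := norm_le_norm_add_norm_sub j k
  have h3 := le_max_left (1 + ‖j‖) M
  have h4 := le_max_right (1 + ‖j‖) M
  have h5 := norm_nonneg j
  exact max_le (by linarith) (by linarith)

lemma clusterSup_le (hG : ∀ j k, G.Reachable j k → ‖j - k‖ ≤ M) (j : Fin d → ℤ) :
    clusterSup G M j ≤ 2 * max (1 + ‖j‖) M :=
  csSup_le ⟨_, j, SimpleGraph.Reachable.refl j, rfl⟩ (clusterSup_upper hG j)

lemma le_clusterSup (hG : ∀ j k, G.Reachable j k → ‖j - k‖ ≤ M) (j : Fin d → ℤ) :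
    max (1 + ‖j‖) M ≤ clusterSup G M j :=
  le_csSup ⟨_, clusterSup_upper hG j⟩ ⟨j, SimpleGraph.Reachable.refl j, rfl⟩

lemma one_le_clusterSup (hG : ∀ j k, G.Reachable j k → ‖j - k‖ ≤ M) (j : Fin d → ℤ) :
    1 ≤ clusterSup G M j :=
  (le_add_of_nonneg_right (norm_nonneg j)).trans ((le_max_left _ _).trans (le_clusterSup hG j))

lemma clusterSup_moderate (hG : ∀ j k, G.Reachable j k → ‖j - k‖ ≤ M) (j k : Fin d → ℤ) :
    clusterSup G M j ≤ 2 * clusterSup G M k * (1 + ‖j - k‖) := by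
  have h1 := le_clusterSup hG k
  have h2 := one_le_clusterSup hG k
  have h3 := norm_nonneg (j - k)
  have h4 : ‖j‖ ≤ ‖k‖ + ‖j - k‖ := norm_le_norm_add_norm_sub' j k
  have h5 := le_max_left (1 + ‖k‖) M
  have h6 := le_max_right (1 + ‖k‖) M
  have h7 : max (1 + ‖j‖) M ≤ clusterSup G M k * (1 + ‖j - k‖) :=
    max_le (by nlinarith) (by nlinarith)
  linarith [clusterSup_le hG j]

end ClusterSup

theorem exists_clusterWeight {W : Matrix (Fin d) (Fin d) ℝ} (hW : IsUnit W.det) {r : ℝ}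
    (hr : 0 < r) : ∃ C : ℝ, 1 ≤ C ∧ ∃ b : ℕ, ∃ w : Param → (Fin d → ℤ) → ℝ,
      IsClusterWeight (mu W) w ∧ ∀ p j, (1 + ‖j‖) ^ r ≤ w p j ∧
        w p j ≤ (C * (p : ℝ) ^ b) ^ r * (1 + ‖j‖) ^ r := by
  obtain ⟨C, hC, b, h⟩ := exists_cluster_diam_le hW
  set v : Param → (Fin d → ℤ) → ℝ := fun p => clusterSup (clusterGraph (mu W) p) (C * (p : ℝ) ^ b)
  have hG (p : Param) := h p (param_one_le p)
  have hv1 (p j) : 1 ≤ v p j := one_le_clusterSup (hG p) j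
  have hv0 (p j) : 0 < v p j := one_pos.trans_le (hv1 p j)
  have hM (p : Param) : 1 ≤ C * (p : ℝ) ^ b :=
    one_le_mul_of_one_le_of_one_le hC (one_le_pow₀ (param_one_le p))
  refine ⟨2 * C, by linarith, b, fun p j => v p j ^ r,
    ⟨fun p j => Real.rpow_pos_of_pos (hv0 p j) r, ?_, fun p j k hjk hμ => ?_⟩, fun p j => ⟨?_, ?_⟩⟩
  · refine ⟨2 ^ r, by positivity, ⌈r⌉₊, fun p j k => ?_⟩
    have h1 := clusterSup_moderate (hG p) j k
    have h2 := (hv0 p k).le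
    calc v p j ^ r ≤ (2 * v p k * (1 + ‖j - k‖)) ^ r :=
          Real.rpow_le_rpow (hv0 p j).le h1 hr.le
      _ = 2 ^ r * v p k ^ r * (1 + ‖j - k‖) ^ r := by
          rw [Real.mul_rpow (by positivity) (by positivity), Real.mul_rpow (by norm_num) h2]
      _ ≤ 2 ^ r * v p k ^ r * (1 + ‖j - k‖) ^ ⌈r⌉₊ := by
          gcongr
          rw [← Real.rpow_natCast]
          exact Real.rpow_le_rpow_of_exponent_le (le_add_of_nonneg_right (norm_nonneg _))
            (Nat.le_ceil r)
  · have hreach : (clusterGraph (mu W) p).Reachable j k := by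
      by_cases hne : j = k
      · subst hne; exact SimpleGraph.Reachable.refl j
      · exact SimpleGraph.Adj.reachable ⟨hne, hjk, hμ⟩
    simp only [v, clusterSup_eq hreach]
  · exact Real.rpow_le_rpow (by positivity) ((le_max_left _ _).trans (le_clusterSup (hG p) j)) hr.le
  · rw [← Real.mul_rpow (by linarith [hM p]) (by positivity)]
    refine Real.rpow_le_rpow (hv0 p j).le ((clusterSup_le (hG p) j).trans ?_) hr.le
    have h1 : max (1 + ‖j‖) (C * (p : ℝ) ^ b) ≤ C * (p : ℝ) ^ b * (1 + ‖j‖) :=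
      max_le (le_mul_of_one_le_left (by positivity) (hM p))
        (le_mul_of_one_le_right (by linarith [hM p]) (le_add_of_nonneg_right (norm_nonneg _)))
    linarith

/-! ### The potential -/

lemma norm_le_sqrt_znormSq (k : Fin d → ℤ) : ‖k‖ ≤ √(znormSq k) := by
  refine (pi_norm_le_iff_of_nonneg (Real.sqrt_nonneg _)).2 fun i => Real.le_sqrt_of_sq_le ?_
  rw [Int.norm_eq_abs, sq_abs]
  exact Finset.single_le_sum (f := fun i => ((k i : ℝ)) ^ 2) (fun _ _ => sq_nonneg _)
    (Finset.mem_univ i)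

lemma znormSq_nonneg (k : Fin d → ℤ) : 0 ≤ znormSq k := Finset.sum_nonneg fun _ _ => sq_nonneg _

lemma sq_one_add_norm_le (k : Fin d → ℤ) : (1 + ‖k‖) ^ 2 ≤ 2 * (1 + znormSq k) := by
  have h := (Real.le_sqrt (norm_nonneg k) (znormSq_nonneg k)).1 (norm_le_sqrt_znormSq k)
  nlinarith [sq_nonneg (1 - ‖k‖)]

lemma one_add_znormSq_le (k : Fin d → ℤ) : 1 + znormSq k ≤ (d + 1) * (1 + ‖k‖) ^ 2 := by
  have h : znormSq k ≤ d * ‖k‖ ^ 2 := by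
    calc znormSq k ≤ ∑ _i : Fin d, ‖k‖ ^ 2 := Finset.sum_le_sum fun i _ => by
          have := norm_le_pi_norm k i
          rw [Int.norm_eq_abs] at this
          rw [← sq_abs]
          exact pow_le_pow_left₀ (abs_nonneg _) this 2
      _ = d * ‖k‖ ^ 2 := by simp
  have h1 := norm_nonneg k
  have h2 : (0 : ℝ) ≤ d := Nat.cast_nonneg d
  nlinarith [mul_nonneg h2 h1]

theorem symbolClass_potential {Vhat : ℝ → (Fin d → ℤ) → ℂ}
    (hsmooth : ∀ k, ContDiff ℝ (⊤ : ℕ∞) (fun t => Vhat t k))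
    (hdecay : ∀ l N : ℕ, ∃ ClN : ℝ, 0 < ClN ∧ ∀ (t : ℝ) (k : Fin d → ℤ),
      ‖iteratedDeriv l (fun s => Vhat s k) t‖ ≤
        ClN * (1 + Real.sqrt (znormSq k)) ^ (-(N : ℝ))) (l : ℕ) :
    ∀ n : ℕ, SymbolClass 0 l
      fun _ t (j k : Fin d → ℤ) => iteratedDeriv n (fun s => Vhat s (j - k)) t := by
  have hrapid (n : ℕ) : RapidDecay 0
      fun _ t (j k : Fin d → ℤ) => iteratedDeriv n (fun s => Vhat s (j - k)) t := by
    intro N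
    obtain ⟨C, hC, h⟩ := hdecay n N
    refine ⟨C, hC.le, fun p t j k => (h t (j - k)).trans ?_⟩
    rw [pow_zero, inv_one, mul_one, Real.rpow_neg (by positivity), Real.rpow_natCast]
    gcongr
    exact norm_le_sqrt_znormSq _
  induction l with
  | zero => exact fun n => hrapid n
  | succ l ih =>
    refine fun n => ⟨hrapid n, _, fun p j k t => ?_, ih (n + 1)⟩
    rw [iteratedDeriv_succ]
    have h := (hsmooth (j - k)).differentiable_iteratedDeriv n
      (by exact_mod_cast WithTop.coe_lt_top n)
    exact (h t).hasDerivAt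

/-- The Toeplitz matrix of multiplication by the potential. -/
noncomputable def potentialSymbol {Vhat : ℝ → (Fin d → ℤ) → ℂ}
    (hsmooth : ∀ k, ContDiff ℝ (⊤ : ℕ∞) (fun t => Vhat t k))
    (hdecay : ∀ l N : ℕ, ∃ ClN : ℝ, 0 < ClN ∧ ∀ (t : ℝ) (k : Fin d → ℤ),
      ‖iteratedDeriv l (fun s => Vhat s k) t‖ ≤
        ClN * (1 + Real.sqrt (znormSq k)) ^ (-(N : ℝ))) : SymbolRing d :=
  ⟨fun _ t j k => Vhat t (j - k), fun l => by
    simpa only [iteratedDeriv_zero] using symbolClass_potential hsmooth hdecay l 0⟩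

/-! ### Comparison of the energies -/

lemma sq_rpow_one_add_norm (r : ℝ) (j : Fin d → ℤ) :
    ((1 + ‖j‖) ^ r) ^ 2 = ((1 + ‖j‖) ^ 2) ^ r := by
  rw [← Real.rpow_natCast, ← Real.rpow_natCast, ← Real.rpow_mul (by positivity),
    ← Real.rpow_mul (by positivity), mul_comm]

lemma sq_rpow_one_add_norm_le {r : ℝ} (hr : 0 ≤ r) (j : Fin d → ℤ) :
    ((1 + ‖j‖) ^ r) ^ 2 ≤ 2 ^ r * (1 + znormSq j) ^ r := by
  have hz := znormSq_nonneg j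
  rw [sq_rpow_one_add_norm, ← Real.mul_rpow (by norm_num) (by positivity)]
  exact Real.rpow_le_rpow (by positivity) (sq_one_add_norm_le j) hr

lemma one_add_znormSq_rpow_le {r : ℝ} (hr : 0 ≤ r) (j : Fin d → ℤ) :
    (1 + znormSq j) ^ r ≤ (d + 1) ^ r * ((1 + ‖j‖) ^ r) ^ 2 := by
  have hz := znormSq_nonneg j
  rw [sq_rpow_one_add_norm, ← Real.mul_rpow (by positivity) (by positivity)]
  exact Real.rpow_le_rpow (by positivity) (one_add_znormSq_le j) hr

lemma sq_sobNorm (r : ℝ) (ψ : (Fin d → ℤ) → ℂ) :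
    sobNorm r ψ ^ 2 = ∑' j, (1 + znormSq j) ^ r * ‖ψ j‖ ^ 2 :=
  Real.sq_sqrt <| tsum_nonneg fun j => by
    have := znormSq_nonneg j
    positivity

/-- A continuous curve in `h^r` is bounded on compact time intervals. -/
lemma bddAbove_sq_sobNorm {r : ℝ} {ψ : ℝ → (Fin d → ℤ) → ℂ}
    (hs : ∀ t, Summable (fun j => (1 + znormSq j) ^ r * ‖ψ t j‖ ^ 2))
    (hc : ∀ t₀ : ℝ, ∀ η : ℝ, 0 < η → ∃ δ : ℝ, 0 < δ ∧ ∀ t, |t - t₀| < δ →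
      sobNorm r (fun j => ψ t j - ψ t₀ j) < η) (T : ℝ) :
    BddAbove ((fun t => sobNorm r (ψ t) ^ 2) '' Set.Icc (-T) T) := by
  refine isCompact_Icc.induction_on (p := fun s => BddAbove ((fun t => sobNorm r (ψ t) ^ 2) '' s))
    (by simp) (fun s t hst ht => ht.mono (Set.image_mono hst))
    (fun s t h1 h2 => by rw [Set.image_union]; exact h1.union h2) fun t₀ _ => ?_
  obtain ⟨δ, hδ, h⟩ := hc t₀ 1 one_pos
  refine ⟨Metric.ball t₀ δ, mem_nhdsWithin_of_mem_nhds (Metric.ball_mem_nhds t₀ hδ),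
    2 * 1 + 2 * sobNorm r (ψ t₀) ^ 2, ?_⟩
  rintro _ ⟨t, ht, rfl⟩
  have hw (j : Fin d → ℤ) : 0 ≤ (1 + znormSq j) ^ r := by
    have := znormSq_nonneg j
    positivity
  have hdiff : Summable fun j => (1 + znormSq j) ^ r * ‖ψ t j - ψ t₀ j‖ ^ 2 := by
    refine (((hs t).mul_left 2).add ((hs t₀).mul_left 2)).of_nonneg_of_le
      (fun j => mul_nonneg (hw j) (sq_nonneg _)) fun j => ?_
    have h1 := norm_sub_le (ψ t j) (ψ t₀ j)
    have h2 : ‖ψ t j - ψ t₀ j‖ ^ 2 ≤ 2 * ‖ψ t j‖ ^ 2 + 2 * ‖ψ t₀ j‖ ^ 2 := by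
      nlinarith [norm_nonneg (ψ t j - ψ t₀ j), sq_nonneg (‖ψ t j‖ - ‖ψ t₀ j‖)]
    nlinarith [mul_le_mul_of_nonneg_left h2 (hw j)]
  have hlt := h t (by simpa [Real.dist_eq] using ht)
  have hle : sobNorm r (fun j => ψ t j - ψ t₀ j) ^ 2 ≤ 1 :=
    pow_le_one₀ (Real.sqrt_nonneg _) hlt.le
  refine le_trans ?_ (add_le_add_left (mul_le_mul_of_nonneg_left hle zero_le_two) _)
  beta_reduce
  rw [sq_sobNorm, sq_sobNorm, sq_sobNorm, ← tsum_mul_left, ← tsum_mul_left,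
    ← (hdiff.mul_left 2).tsum_add ((hs t₀).mul_left 2)]
  refine (hs t).tsum_le_tsum (fun j => ?_) ((hdiff.mul_left 2).add ((hs t₀).mul_left 2))
  have h1 : ‖ψ t j‖ ≤ ‖ψ t j - ψ t₀ j‖ + ‖ψ t₀ j‖ := by
    simpa using norm_add_le (ψ t j - ψ t₀ j) (ψ t₀ j)
  have h2 : ‖ψ t j‖ ^ 2 ≤ 2 * ‖ψ t j - ψ t₀ j‖ ^ 2 + 2 * ‖ψ t₀ j‖ ^ 2 := by
    nlinarith [norm_nonneg (ψ t j), sq_nonneg (‖ψ t j - ψ t₀ j‖ - ‖ψ t₀ j‖)]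
  nlinarith [mul_le_mul_of_nonneg_left h2 (hw j)]

/-- Conjugating the Schrödinger equation by a weight. -/
lemma hasDerivAt_weight_mul {μ w : (Fin d → ℤ) → ℝ} (hw : ∀ j, 0 < w j)
    {v : (Fin d → ℤ) → ℂ} {ψ : ℝ → (Fin d → ℤ) → ℂ} {j : Fin d → ℤ} {t : ℝ}
    (h : HasDerivAt (fun s => ψ s j)
      (-Complex.I * (μ j * ψ t j + ∑' k : Fin d → ℤ, v (j - k) * ψ t k)) t) :
    HasDerivAt (fun s => (w j : ℂ) * ψ s j) (-Complex.I * (μ j * (w j * ψ t j) +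
      ∑' k : Fin d → ℤ, ((w j / w k : ℝ) : ℂ) * v (j - k) * (w k * ψ t k))) t := by
  have hsum : ∑' k : Fin d → ℤ, ((w j / w k : ℝ) : ℂ) * v (j - k) * (w k * ψ t k)
      = w j * ∑' k : Fin d → ℤ, v (j - k) * ψ t k := by
    rw [← tsum_mul_left]
    refine tsum_congr fun k => ?_
    have hk : (w k : ℂ) ≠ 0 := by exact_mod_cast (hw k).ne'
    push_cast
    field_simp
  rw [hsum]
  exact (h.const_mul (w j : ℂ)).congr_deriv (by ring)

lemma sq_norm_weight_mul_le {r B : ℝ} (hr : 0 ≤ r) {w : (Fin d → ℤ) → ℝ} (hw : ∀ j, 0 < w j)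
    (hup : ∀ j, w j ≤ B * (1 + ‖j‖) ^ r) (φ : (Fin d → ℤ) → ℂ) (j : Fin d → ℤ) :
    ‖(w j : ℂ) * φ j‖ ^ 2 ≤ B ^ 2 * 2 ^ r * ((1 + znormSq j) ^ r * ‖φ j‖ ^ 2) := by
  rw [norm_mul, mul_pow, Complex.norm_real, Real.norm_of_nonneg (hw j).le, ← mul_assoc]
  gcongr
  calc w j ^ 2 ≤ (B * (1 + ‖j‖) ^ r) ^ 2 := pow_le_pow_left₀ (hw j).le (hup j) 2
    _ = B ^ 2 * ((1 + ‖j‖) ^ r) ^ 2 := mul_pow _ _ _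
    _ ≤ B ^ 2 * (2 ^ r * (1 + znormSq j) ^ r) := by
      gcongr
      exact sq_rpow_one_add_norm_le hr j
    _ = _ := by ring

lemma summable_sq_norm_weight_mul {r B : ℝ} (hr : 0 ≤ r) {w : (Fin d → ℤ) → ℝ}
    (hw : ∀ j, 0 < w j) (hup : ∀ j, w j ≤ B * (1 + ‖j‖) ^ r) {φ : (Fin d → ℤ) → ℂ}
    (hφ : Summable fun j => (1 + znormSq j) ^ r * ‖φ j‖ ^ 2) :
    Summable fun j => ‖(w j : ℂ) * φ j‖ ^ 2 :=
  (hφ.mul_left (B ^ 2 * 2 ^ r)).of_nonneg_of_le (fun _ => sq_nonneg _)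
    (sq_norm_weight_mul_le hr hw hup φ)

lemma tsum_sq_norm_weight_mul_le {r B : ℝ} (hr : 0 ≤ r) {w : (Fin d → ℤ) → ℝ}
    (hw : ∀ j, 0 < w j) (hup : ∀ j, w j ≤ B * (1 + ‖j‖) ^ r) {φ : (Fin d → ℤ) → ℂ}
    (hφ : Summable fun j => (1 + znormSq j) ^ r * ‖φ j‖ ^ 2) :
    ∑' j, ‖(w j : ℂ) * φ j‖ ^ 2 ≤ B ^ 2 * 2 ^ r * sobNorm r φ ^ 2 := by
  rw [sq_sobNorm, ← tsum_mul_left]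
  exact (summable_sq_norm_weight_mul hr hw hup hφ).tsum_le_tsum
    (sq_norm_weight_mul_le hr hw hup φ) (hφ.mul_left _)

lemma sq_sobNorm_le_tsum {r : ℝ} (hr : 0 ≤ r) {w : (Fin d → ℤ) → ℝ}
    (hlow : ∀ j, (1 + ‖j‖) ^ r ≤ w j) {φ : (Fin d → ℤ) → ℂ}
    (hφ : Summable fun j => (1 + znormSq j) ^ r * ‖φ j‖ ^ 2)
    (hφw : Summable fun j => ‖(w j : ℂ) * φ j‖ ^ 2) :
    sobNorm r φ ^ 2 ≤ (d + 1) ^ r * ∑' j, ‖(w j : ℂ) * φ j‖ ^ 2 := by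
  rw [sq_sobNorm, ← tsum_mul_left]
  refine hφ.tsum_le_tsum (fun j => ?_) (hφw.mul_left _)
  rw [norm_mul, mul_pow, Complex.norm_real, Real.norm_eq_abs, sq_abs, ← mul_assoc]
  gcongr
  refine (one_add_znormSq_rpow_le hr j).trans ?_
  gcongr
  exact hlow j

end SobolevGrowth

open SobolevGrowth
theorem growth_of_sobolev_norms
    (d : ℕ) (hd : 1 ≤ d) (W : Matrix (Fin d) (Fin d) ℝ) (hW : IsUnit W.det)
    (Vhat : ℝ → (Fin d → ℤ) → ℂ)
    -- smoothness of the potential in time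
    (hsmooth : ∀ k, ContDiff ℝ (⊤ : ℕ∞) (fun t => Vhat t k))
    -- reality of the potential
    (hreal : ∀ t k, Vhat t (-k) = starRingEnd ℂ (Vhat t k))
    -- decay of the Fourier coefficients together with all time derivatives
    (hdecay : ∀ l N : ℕ, ∃ ClN : ℝ, 0 < ClN ∧ ∀ (t : ℝ) (k : Fin d → ℤ),
      ‖iteratedDeriv l (fun s => Vhat s k) t‖ ≤
        ClN * (1 + Real.sqrt (znormSq k)) ^ (-(N : ℝ)))
    (r ε : ℝ) (hr : 0 < r) (hε : 0 < ε) :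
    ∃ C : ℝ, 0 < C ∧
      ∀ ψ : ℝ → (Fin d → ℤ) → ℂ,
        -- ψ(t) ∈ h^r for all t
        (∀ t, Summable (fun j => (1 + znormSq j) ^ r * ‖ψ t j‖ ^ 2)) →
        -- continuity of t ↦ ψ(t) as a map into h^r
        (∀ t₀ : ℝ, ∀ η : ℝ, 0 < η → ∃ δ : ℝ, 0 < δ ∧ ∀ t, |t - t₀| < δ →
          sobNorm r (fun j => ψ t j - ψ t₀ j) < η) →
        -- the Fourier-side Schrödinger equation i ψ_j' = μ_j ψ_j + Σ_k V̂(t,j-k) ψ_k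
        (∀ (j : Fin d → ℤ) (t : ℝ), HasDerivAt (fun s => ψ s j)
          (-Complex.I * ((mu W j : ℝ) * ψ t j + ∑' k : Fin d → ℤ, Vhat t (j - k) * ψ t k)) t) →
        ∀ t : ℝ, sobNorm r (ψ t) ≤ C * (1 + |t|) ^ ε * sobNorm r (ψ 0) := by
  obtain ⟨C, hC, b, w, hw, hbd⟩ := exists_clusterWeight hW hr
  obtain ⟨K, hK⟩ := exists_nat_gt (b * r / ε)
  have hK0 : (0 : ℝ) < K := lt_of_le_of_lt (by positivity) hK
  obtain ⟨A, A', R, hA, hR, hH, hA'⟩ :=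
    SymbolRing.exists_energySymbol hw (potentialSymbol hsmooth hdecay) K
  obtain ⟨D, hD, henergy⟩ := exists_energy_bound hA hR hH hA' fun p t j m => by
    rw [SymbolRing.entry_schur, SymbolRing.entry_schur]
    change ratioInv w p m j * Vhat t (m - j) = star (ratio w p j m * Vhat t (j - m))
    rw [← neg_sub j m, hreal]
    simp [ratio, ratioInv]
  refine ⟨√((d + 1) ^ r * 6 * 2 ^ r) * ((C * D ^ b) ^ r), by positivity, fun ψ hs hc hψ t => ?_⟩
  have hx : 1 ≤ 1 + |t| := le_add_of_nonneg_right (abs_nonneg t)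
  have hx0 : 0 < 1 + |t| := one_pos.trans_le hx
  have hx1 : 1 ≤ (1 + |t|) ^ (K⁻¹ : ℝ) := Real.one_le_rpow hx (by positivity)
  have hDp : D ≤ D * (1 + |t|) ^ (K⁻¹ : ℝ) := le_mul_of_one_le_right (by linarith) hx1
  let p : Param := ⟨D * (1 + |t|) ^ (K⁻¹ : ℝ), hD.trans hDp⟩
  have hpK : D * |t| ≤ (p : ℝ) ^ K := by
    have hK1 : K ≠ 0 := by exact_mod_cast hK0.ne'
    rw [mul_pow, Real.rpow_inv_natCast_pow hx0.le hK1]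
    gcongr
    · exact le_self_pow₀ hD hK1
    · linarith
  set B : ℝ := (C * (p : ℝ) ^ b) ^ r with hB
  have hB0 : 0 ≤ B := by have := param_pos p; positivity
  have hwp := hw.pos p
  have hlow j := (hbd p j).1
  have hup j := (hbd p j).2
  have hsum s := summable_sq_norm_weight_mul hr.le hwp hup (hs s)
  have hbdd : BddAbove ((fun s => ∑' j, ‖(w p j : ℂ) * ψ s j‖ ^ 2) '' Set.Icc (-|t|) |t|) := by
    obtain ⟨M, hM⟩ := bddAbove_sq_sobNorm hs hc |t|
    refine ⟨B ^ 2 * 2 ^ r * M, ?_⟩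
    rintro _ ⟨s, hs', rfl⟩
    refine (tsum_sq_norm_weight_mul_le hr.le hwp hup (hs s)).trans ?_
    gcongr
    exact hM ⟨s, hs', rfl⟩
  have hmain := henergy p |t| hDp (abs_nonneg t) hpK (fun s j => w p j * ψ s j) hsum
    (fun j s => hasDerivAt_weight_mul hwp (hψ j s)) hbdd t ⟨neg_abs_le t, le_abs_self t⟩
  have hBle : B ≤ (C * D ^ b) ^ r * (1 + |t|) ^ ε := by
    have hy : ((1 + |t|) ^ (K⁻¹ : ℝ)) ^ b = (1 + |t|) ^ ((K : ℝ)⁻¹ * b) := by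
      rw [← Real.rpow_natCast, ← Real.rpow_mul hx0.le]
    rw [hB, mul_pow, ← mul_assoc, Real.mul_rpow (by positivity) (by positivity), hy,
      ← Real.rpow_mul hx0.le]
    gcongr
    rw [div_lt_iff₀ hε] at hK
    rw [mul_assoc, inv_mul_le_iff₀ hK0]
    exact hK.le
  have hS (φ : (Fin d → ℤ) → ℂ) : 0 ≤ sobNorm r φ := Real.sqrt_nonneg _
  have hfin : sobNorm r (ψ t) ≤ √((d + 1) ^ r * 6 * 2 ^ r) * B * sobNorm r (ψ 0) := by
    refine abs_le_of_sq_le_sq' ?_ (mul_nonneg (by positivity) (hS _)) |>.2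
    rw [mul_pow, mul_pow, Real.sq_sqrt (by positivity)]
    calc sobNorm r (ψ t) ^ 2 ≤ (d + 1) ^ r * ∑' j, ‖(w p j : ℂ) * ψ t j‖ ^ 2 :=
          sq_sobNorm_le_tsum hr.le hlow (hs t) (hsum t)
      _ ≤ (d + 1) ^ r * (6 * (B ^ 2 * 2 ^ r * sobNorm r (ψ 0) ^ 2)) := by
        gcongr
        refine hmain.trans ?_
        gcongr
        exact tsum_sq_norm_weight_mul_le hr.le hwp hup (hs 0)
      _ = _ := by ring
  refine hfin.trans (mul_le_mul_of_nonneg_right ?_ (hS _))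
  rw [mul_assoc _ ((C * D ^ b) ^ r)]
  gcongr
end

section
/- There is a constant C(d) > 0, depending only on d, with the following property. Let B ≥ 1 and λ ∈ [1/2,3/2], suppose |l_i|_∞ ≤ B and |k_i|_∞ ≤ B for all 1 ≤ i ≤ g, and suppose the vectors f_i(λ) := (λ ω̄·l_i, k_i), i = 1,…,g, are linearly independent in ℝ^{1+d}. Then there exist p ∈ ℤ^{binom(d,g)} and a family m = (m_{a⃗})_{a⃗} of vectors m_{a⃗} ∈ ℤ^n, indexed by the (g−1)-element subsets a⃗ of {1,…,d}, with (p, m) ≠ (0,0) and |m_{a⃗}|_∞ ≤ C(d) B^g for all a⃗, such that for every t ∈ ℝ: det A_t = ‖𝔠_g(W) p‖² − t² ‖𝔠_{g−1}(W) ((ω̄·m_{a⃗})_{a⃗})‖². In particular, since the compound matrices 𝔠_g(W) and 𝔠_{g−1}(W) are invertible, the polynomial t ↦ det A_t is not identically zero. -/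
/-- Real cast of an integer vector. -/
def zc {d : ℕ} (j : Fin d → ℤ) : Fin d → ℝ := fun a => (j a : ℝ)

/-- Scalar product ⟨y,y'⟩_W = ⟨Wy, Wy'⟩ induced by W. -/
noncomputable def ipW {d : ℕ} (W : Matrix (Fin d) (Fin d) ℝ) (y y' : Fin d → ℝ) : ℝ :=
  ∑ i, W.mulVec y i * W.mulVec y' i

/-- The g-th compound matrix of `W`: indexed by g-element subsets of `Fin d`, with
entries the corresponding g×g minors of `W`. -/
noncomputable def compound {d : ℕ} (W : Matrix (Fin d) (Fin d) ℝ) (g : ℕ) :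
    Matrix {s : Finset (Fin d) // s.card = g} {s : Finset (Fin d) // s.card = g} ℝ :=
  fun a b =>
    (W.submatrix (fun u : Fin g => a.1.orderEmbOfFin a.2 u)
      (fun v : Fin g => b.1.orderEmbOfFin b.2 v)).det

/-- The g×g matrix A_t with entries (A_t)_i^{i'} = −t²(ω̄·l_i)(ω̄·l_{i'}) + ⟨k_i,k_{i'}⟩_W. -/
noncomputable def Amat {d n g : ℕ} (W : Matrix (Fin d) (Fin d) ℝ) (ω : Fin n → ℝ)
    (l : Fin g → Fin n → ℤ) (k : Fin g → Fin d → ℤ) (t : ℝ) :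
    Matrix (Fin g) (Fin g) ℝ :=
  Matrix.of fun i i' =>
    -(t ^ 2 * (∑ p, ω p * (l i p : ℝ)) * (∑ p, ω p * (l i' p : ℝ))) +
      ipW W (zc (k i)) (zc (k i'))

open Matrix Finset

/-- Expansion of the determinant of a product along all choices of a column for every row. -/
theorem det_mul_eq_sum_prod_mul_det {R ι κ : Type*} [CommRing R] [Fintype ι] [DecidableEq ι]
    [Fintype κ] [DecidableEq κ] (M : Matrix κ ι R) (N : Matrix ι κ R) :
    (M * N).det = ∑ f : κ → ι, (∏ i, M i (f i)) * (N.submatrix f id).det := by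
  have hrow : M * N = fun i => ∑ j, M i j • N j := by
    ext i c
    simp [Matrix.mul_apply, Finset.sum_apply]
  have hsum := (detRowAlternating (n := κ) (R := R)).toMultilinearMap.map_sum
    (fun i j => M i j • N j)
  calc (M * N).det = detRowAlternating (fun i => ∑ j, M i j • N j) := by rw [hrow]; rfl
    _ = ∑ f : κ → ι, detRowAlternating (fun i => M i (f i) • N (f i)) := hsum
    _ = _ := by
      refine Finset.sum_congr rfl fun f _ => ?_
      exact (detRowAlternating (n := κ) (R := R)).toMultilinearMap.map_smul_univ
        (fun i => M i (f i)) (fun i => N (f i))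

/-- The **Cauchy–Binet formula**. -/
theorem det_mul_eq_sum_minors {R ι : Type*} [CommRing R] [Fintype ι] [LinearOrder ι] {g : ℕ}
    (M : Matrix (Fin g) ι R) (N : Matrix ι (Fin g) R) :
    (M * N).det = ∑ s : {s : Finset ι // s.card = g},
      (M.submatrix id (s.1.orderEmbOfFin s.2)).det *
        (N.submatrix (s.1.orderEmbOfFin s.2) id).det := by
  classical
  have hterm (s : {s : Finset ι // s.card = g}) :
      (M.submatrix id (s.1.orderEmbOfFin s.2)).det *
        (N.submatrix (s.1.orderEmbOfFin s.2) id).det =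
      ∑ σ : Equiv.Perm (Fin g), (∏ i, M i (s.1.orderEmbOfFin s.2 (σ i))) *
        (N.submatrix (s.1.orderEmbOfFin s.2 ∘ σ) id).det := by
    rw [← det_transpose, det_apply', Finset.sum_mul]
    refine Finset.sum_congr rfl fun σ _ => ?_
    have hperm := det_permute σ (N.submatrix (s.1.orderEmbOfFin s.2) id)
    rw [submatrix_submatrix] at hperm
    simp only [Function.comp_id] at hperm
    rw [hperm]
    simp only [transpose_apply, submatrix_apply, id]
    ring
  rw [det_mul_eq_sum_prod_mul_det, Finset.sum_congr rfl fun s _ => hterm s,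
    ← Fintype.sum_prod_type']
  have himage (s : {s : Finset ι // s.card = g}) (σ : Equiv.Perm (Fin g)) :
      Set.range (s.1.orderEmbOfFin s.2 ∘ σ) = s.1 := by
    rw [Set.range_comp, σ.surjective.range_eq, Set.image_univ, Finset.range_orderEmbOfFin]
  symm
  refine Fintype.sum_of_injective
    (fun q : {s : Finset ι // s.card = g} × Equiv.Perm (Fin g) =>
      q.1.1.orderEmbOfFin q.1.2 ∘ q.2) ?_ _ _ ?_ fun _ => rfl
  · rintro ⟨s, σ⟩ ⟨s', σ'⟩ h
    have hs : s = s' := by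
      apply Subtype.ext
      rw [← Finset.coe_inj, ← himage s σ, ← himage s' σ']
      exact congrArg Set.range h
    subst hs
    have hσ : σ = σ' := Equiv.ext fun i =>
      (s.1.orderEmbOfFin s.2).injective (congrFun h i)
    rw [hσ]
  · intro f hf
    have hninj : ¬ Function.Injective f := by
      intro hinj
      apply hf
      have hcard : (univ.image f).card = g := by
        rw [Finset.card_image_of_injective _ hinj, Finset.card_univ, Fintype.card_fin]
      let e := (univ.image f).orderIsoOfFin hcard
      let τ : Fin g → Fin g := fun i => e.symm ⟨f i, Finset.mem_image_of_mem f (mem_univ i)⟩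
      have hτ : Function.Injective τ := fun i j hij => hinj (by
        simpa [τ] using hij)
      refine ⟨(⟨univ.image f, hcard⟩,
        Equiv.ofBijective τ (Finite.injective_iff_bijective.mp hτ)), ?_⟩
      funext i
      change (e (τ i) : ι) = f i
      simp [τ]
    obtain ⟨i, j, hij, hne⟩ := Function.not_injective_iff.mp hninj
    rw [det_zero_of_row_eq hne (by ext c; simp [hij]), mul_zero]

/-- Sums over the `(g + 1)`-element subsets of `Fin (d + 1)` split according to whether the subset
contains `0`. -/
theorem sum_subsets_fin_succ {R : Type*} [AddCommMonoid R] {d g : ℕ}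
    (φ : (Fin (g + 1) → Fin (d + 1)) → R) :
    ∑ s : {s : Finset (Fin (d + 1)) // s.card = g + 1}, φ (s.1.orderEmbOfFin s.2) =
      ∑ s : {s : Finset (Fin d) // s.card = g + 1},
          φ (fun i => (s.1.orderEmbOfFin s.2 i).succ) +
        ∑ s : {s : Finset (Fin d) // s.card = g},
          φ (Fin.cons 0 fun i => (s.1.orderEmbOfFin s.2 i).succ) := by
  let e : {s : Finset (Fin d) // s.card = g + 1} ⊕ {s : Finset (Fin d) // s.card = g} →
      {s : Finset (Fin (d + 1)) // s.card = g + 1} :=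
    Sum.elim (fun s => ⟨s.1.map (Fin.succEmb d), by rw [card_map, s.2]⟩)
      (fun s => ⟨insert 0 (s.1.map (Fin.succEmb d)), by
        rw [card_insert_of_notMem (by simp [Fin.succ_ne_zero]), card_map, s.2]⟩)
  have he : Function.Bijective e := by
    constructor
    · rintro (s | s) (s' | s') h
      · have h := congrArg Subtype.val h
        exact congrArg Sum.inl (Subtype.ext (Finset.map_injective _ h))
      · have h := Finset.ext_iff.mp (congrArg Subtype.val h) 0
        simp [e, Fin.succ_ne_zero] at h
      · have h := Finset.ext_iff.mp (congrArg Subtype.val h) 0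
        simp [e, Fin.succ_ne_zero] at h
      · have h := Finset.ext_iff.mp (congrArg Subtype.val h)
        refine congrArg Sum.inr (Subtype.ext (Finset.ext fun i => ?_))
        simpa [e, Fin.succ_ne_zero] using h i.succ
    · rintro ⟨s, hs⟩
      let r : Finset (Fin d) := univ.filter fun i => i.succ ∈ s
      by_cases h0 : (0 : Fin (d + 1)) ∈ s
      · have hr : insert 0 (r.map (Fin.succEmb d)) = s := by
          ext i
          refine Fin.cases ?_ (fun i => ?_) i <;> simp [r, h0, Fin.succ_ne_zero]
        have hcard : r.card = g := by
          have := hr ▸ hs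
          rw [card_insert_of_notMem (by simp [Fin.succ_ne_zero]), card_map] at this
          exact Nat.succ_injective this
        exact ⟨Sum.inr ⟨r, hcard⟩, Subtype.ext hr⟩
      · have hr : r.map (Fin.succEmb d) = s := by
          ext i
          refine Fin.cases ?_ (fun i => ?_) i <;> simp [r, h0, Fin.succ_ne_zero]
        have hcard : r.card = g + 1 := by
          rw [← hs, ← hr, card_map]
        exact ⟨Sum.inl ⟨r, hcard⟩, Subtype.ext hr⟩
  rw [← he.sum_comp, Fintype.sum_sum_type]
  congr 1
  · refine Finset.sum_congr rfl fun s _ => congrArg φ ?_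
    symm
    refine Finset.orderEmbOfFin_unique (e (Sum.inl s)).2 (fun i => ?_) ?_
    · simp [e]
    · intro i j hij
      simpa using hij
  · refine Finset.sum_congr rfl fun s _ => congrArg φ ?_
    symm
    refine Finset.orderEmbOfFin_unique (e (Sum.inr s)).2 (fun i => ?_) ?_
    · refine Fin.cases ?_ (fun i => ?_) i <;> simp [e]
    · intro i j
      refine Fin.cases ?_ (fun i => ?_) i <;> refine Fin.cases ?_ (fun j => ?_) j <;>
        simp [Fin.succ_pos]

/-- The matrix obtained from `M` by prepending the column `x`. -/
def prependCol {R ι : Type*} {d : ℕ} (x : ι → R) (M : Matrix ι (Fin d) R) :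
    Matrix ι (Fin (d + 1)) R :=
  Matrix.of fun i => Fin.cons (x i) (M i)

/-- Maximal minors of `K * Wᵀ` in terms of those of `K`. -/
theorem det_mul_transpose_submatrix {d g : ℕ} (W : Matrix (Fin d) (Fin d) ℝ)
    (K : Matrix (Fin g) (Fin d) ℝ) (a : {s : Finset (Fin d) // s.card = g}) :
    ((K * Wᵀ).submatrix id (a.1.orderEmbOfFin a.2)).det =
      (compound W g *ᵥ fun b => (K.submatrix id (b.1.orderEmbOfFin b.2)).det) a := by
  have hprod : (K * Wᵀ).submatrix id (a.1.orderEmbOfFin a.2) =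
      K * (Wᵀ.submatrix id (a.1.orderEmbOfFin a.2)) := rfl
  rw [hprod, det_mul_eq_sum_minors]
  refine Finset.sum_congr rfl fun b _ => ?_
  rw [mul_comm, ← det_transpose (Matrix.submatrix _ _ id)]
  rfl

/-- Minors of `[x | K * Wᵀ]` containing the first column in terms of those of `[x | K]`. -/
theorem det_prependCol_mul_transpose {d g : ℕ} (W : Matrix (Fin d) (Fin d) ℝ)
    (x : Fin (g + 1) → ℝ) (K : Matrix (Fin (g + 1)) (Fin d) ℝ)
    (c : {s : Finset (Fin d) // s.card = g}) :
    (prependCol x ((K * Wᵀ).submatrix id (c.1.orderEmbOfFin c.2))).det =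
      (compound W g *ᵥ fun a =>
        (prependCol x (K.submatrix id (a.1.orderEmbOfFin a.2))).det) c := by
  let Q : Matrix (Fin (d + 1)) (Fin (g + 1)) ℝ := Matrix.of
    (Fin.cons (Fin.cons 1 0) fun j => Fin.cons 0 fun u => W (c.1.orderEmbOfFin c.2 u) j)
  have hprod : prependCol x ((K * Wᵀ).submatrix id (c.1.orderEmbOfFin c.2)) =
      prependCol x K * Q := by
    ext i u
    rw [Matrix.mul_apply, Fin.sum_univ_succ]
    refine Fin.cases ?_ (fun u => ?_) u <;> simp [prependCol, Q, Matrix.mul_apply]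
  rw [hprod, det_mul_eq_sum_minors, sum_subsets_fin_succ fun f =>
    ((prependCol x K).submatrix id f).det * (Q.submatrix f id).det]
  rw [Finset.sum_eq_zero, zero_add]
  · refine Finset.sum_congr rfl fun a _ => ?_
    rw [mul_comm]
    congr 1
    · rw [det_succ_column_zero, Fin.sum_univ_succ]
      simp only [Q, submatrix_apply, Matrix.of_apply, Fin.cons_zero, Fin.cons_succ, id,
        submatrix_submatrix, mul_zero, zero_mul, Finset.sum_const_zero, add_zero, Fin.val_zero,
        pow_zero, one_mul]
      rw [← det_transpose, compound]
      congr 1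
    · congr 1
      ext i u
      refine Fin.cases ?_ (fun u => ?_) u <;> simp [prependCol]
  · intro a _
    rw [det_eq_zero_of_column_eq_zero (A := Q.submatrix _ id) 0 fun i => by simp [Q], mul_zero]

/-- The determinant of a rank-one perturbation of the Gram matrix of the rows of `K * Wᵀ`. -/
theorem det_smul_vecMulVec_add_gram {d g : ℕ} (W : Matrix (Fin d) (Fin d) ℝ)
    (x : Fin (g + 1) → ℝ) (K : Matrix (Fin (g + 1)) (Fin d) ℝ) (r : ℝ) :
    (r • vecMulVec x x + (K * Wᵀ) * (K * Wᵀ)ᵀ).det =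
      ∑ a, ((compound W (g + 1) *ᵥ fun b => (K.submatrix id (b.1.orderEmbOfFin b.2)).det) a) ^ 2 +
        r * ∑ c, ((compound W g *ᵥ fun a =>
          (prependCol x (K.submatrix id (a.1.orderEmbOfFin a.2))).det) c) ^ 2 := by
  set M := K * Wᵀ with hM
  have hprod : r • vecMulVec x x + M * Mᵀ = prependCol (r • x) M * (prependCol x M)ᵀ := by
    ext i j
    simp [prependCol, Matrix.mul_apply, Fin.sum_univ_succ, vecMulVec_apply, mul_assoc]
  rw [hprod, det_mul_eq_sum_minors, sum_subsets_fin_succ fun f =>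
    ((prependCol (r • x) M).submatrix id f).det * ((prependCol x M)ᵀ.submatrix f id).det,
    Finset.mul_sum]
  congr 1
  · refine Finset.sum_congr rfl fun a _ => ?_
    rw [← det_mul_transpose_submatrix, sq]
    congr 1
    rw [← det_transpose]
    rfl
  · refine Finset.sum_congr rfl fun c _ => ?_
    rw [← det_prependCol_mul_transpose, sq, ← mul_assoc]
    have hsub (y : Fin (g + 1) → ℝ) :
        (prependCol y M).submatrix id (Fin.cons 0 fun i => (c.1.orderEmbOfFin c.2 i).succ) =
          prependCol y (M.submatrix id (c.1.orderEmbOfFin c.2)) := by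
      ext i u
      refine Fin.cases ?_ (fun u => ?_) u <;> simp [prependCol]
    have hsmul (N : Matrix (Fin (g + 1)) (Fin g) ℝ) :
        (prependCol (r • x) N).det = r * (prependCol x N).det := by
      simp only [det_succ_column_zero, Finset.mul_sum]
      refine Finset.sum_congr rfl fun i _ => ?_
      simp only [prependCol, Matrix.of_apply, Fin.cons_zero, Pi.smul_apply, smul_eq_mul]
      have : (Matrix.of fun i => (Fin.cons (r * x i) (N i) : Fin (g + 1) → ℝ)).submatrix
          i.succAbove Fin.succ = (Matrix.of fun i => (Fin.cons (x i) (N i) :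
            Fin (g + 1) → ℝ)).submatrix i.succAbove Fin.succ := by
        ext; simp
      rw [this]
      ring
    rw [← transpose_submatrix, det_transpose, hsub, hsub, hsmul]

/-- The determinant of `[x | N]` is linear in `x`. -/
theorem sum_mul_det_prependCol {n g : ℕ} (ω : Fin n → ℝ) (l : Fin (g + 1) → Fin n → ℤ)
    (N : Matrix (Fin (g + 1)) (Fin g) ℤ) :
    ∑ p, ω p * (((prependCol (fun i => l i p) N).det : ℤ) : ℝ) =
      (prependCol (fun i => ∑ p, ω p * (l i p : ℝ)) (N.map (Int.cast : ℤ → ℝ))).det := by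
  simp only [det_succ_column_zero, Int.cast_sum, Finset.mul_sum]
  rw [Finset.sum_comm]
  refine Finset.sum_congr rfl fun i _ => ?_
  have hminor (p : Fin n) : ((((prependCol (fun i => l i p) N).submatrix
      i.succAbove Fin.succ).det : ℤ) : ℝ) =
      ((prependCol (fun i => ∑ p, ω p * (l i p : ℝ)) (N.map (Int.cast : ℤ → ℝ))).submatrix
        i.succAbove Fin.succ).det := by
    rw [Int.cast_det]
    rfl
  have hentry : prependCol (fun i => ∑ p, ω p * (l i p : ℝ)) (N.map (Int.cast : ℤ → ℝ)) i 0 =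
      ∑ p, ω p * (l i p : ℝ) := rfl
  rw [hentry, Finset.mul_sum, Finset.sum_mul]
  refine Finset.sum_congr rfl fun p _ => ?_
  have hentry_int : prependCol (fun i => l i p) N i 0 = l i p := rfl
  rw [hentry_int, Int.cast_mul, hminor]
  push_cast
  ring

/-- If the vectors `(lam * x i, K i)` are linearly independent and `W` is invertible, then the
Gram matrix of the vectors `(lam * x i, W (K i))` is nonsingular. -/
theorem det_smul_vecMulVec_add_gram_ne_zero {d g : ℕ} {W : Matrix (Fin d) (Fin d) ℝ}
    (hW : IsUnit W.det) (x : Fin g → ℝ) (K : Matrix (Fin g) (Fin d) ℝ) (lam : ℝ)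
    (hli : LinearIndependent ℝ fun i => (Fin.cons (lam * x i) (K i) : Fin (d + 1) → ℝ)) :
    (lam ^ 2 • vecMulVec x x + (K * Wᵀ) * (K * Wᵀ)ᵀ).det ≠ 0 := by
  intro hdet
  obtain ⟨v, hv, hzero⟩ := exists_mulVec_eq_zero_iff.mpr hdet
  have hquad : (lam * (x ⬝ᵥ v)) ^ 2 + (v ᵥ* (K * Wᵀ)) ⬝ᵥ (v ᵥ* (K * Wᵀ)) = 0 := by
    generalize K * Wᵀ = M at hzero ⊢
    have h := congrArg (v ⬝ᵥ ·) hzero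
    simp only [add_mulVec, smul_mulVec, vecMulVec_mulVec, ← mulVec_mulVec, mulVec_transpose,
      dotProduct_add, dotProduct_smul, dotProduct_zero, dotProduct_mulVec v M] at h
    rw [← h]
    simp [dotProduct_comm v x]
    ring
  have hnonneg : 0 ≤ (v ᵥ* (K * Wᵀ)) ⬝ᵥ (v ᵥ* (K * Wᵀ)) :=
    Finset.sum_nonneg fun i _ => mul_self_nonneg _
  have hx : lam * (x ⬝ᵥ v) = 0 := by nlinarith [sq_nonneg (lam * (x ⬝ᵥ v))]
  have hKW : v ᵥ* (K * Wᵀ) = 0 := dotProduct_self_eq_zero.mp (by rw [hx] at hquad; linarith)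
  have hK : v ᵥ* K = 0 := by
    rw [← vecMul_vecMul, vecMul_transpose] at hKW
    exact mulVec_injective_iff_isUnit.mpr ((isUnit_iff_isUnit_det W).mpr hW)
      (hKW.trans (mulVec_zero W).symm)
  refine hv (funext (Fintype.linearIndependent_iff.mp hli v ?_))
  funext j
  refine Fin.cases ?_ (fun j => ?_) j
  · simp only [Finset.sum_apply, Pi.smul_apply, Fin.cons_zero, smul_eq_mul, Pi.zero_apply]
    rw [← hx, dotProduct, Finset.mul_sum]
    exact Finset.sum_congr rfl fun i _ => by ring
  · simpa [vecMul, dotProduct] using congrFun hK j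

/-- `Amat` as a rank-one perturbation of a Gram matrix. -/
theorem Amat_eq {d n g : ℕ} (W : Matrix (Fin d) (Fin d) ℝ) (ω : Fin n → ℝ)
    (l : Fin g → Fin n → ℤ) (k : Fin g → Fin d → ℤ) (t : ℝ) :
    Amat W ω l k t = (-t ^ 2) • vecMulVec (fun i => ∑ p, ω p * (l i p : ℝ))
      (fun i => ∑ p, ω p * (l i p : ℝ)) +
        ((Matrix.of fun i => zc (k i)) * Wᵀ) * ((Matrix.of fun i => zc (k i)) * Wᵀ)ᵀ := by
  ext i j
  simp [Amat, ipW, Matrix.mul_apply, vecMulVec_apply, mulVec, dotProduct, mul_comm]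
  ring

theorem det_Amat_expansion
    (d : ℕ) (hd : 1 ≤ d) :
    ∃ C : ℝ, 0 < C ∧
      ∀ (W : Matrix (Fin d) (Fin d) ℝ), IsUnit W.det →
      ∀ (n : ℕ), 1 ≤ n →
      ∀ (ω : Fin n → ℝ),
      ∀ (gm : ℕ), gm + 1 ≤ d + 1 →
      ∀ (l : Fin (gm + 1) → Fin n → ℤ) (k : Fin (gm + 1) → Fin d → ℤ),
      ∀ (B : ℝ), 1 ≤ B →
      ∀ (lam : ℝ), lam ∈ Set.Icc (1/2 : ℝ) (3/2) →
        (∀ i p, ((|l i p| : ℤ) : ℝ) ≤ B) →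
        (∀ i a, ((|k i a| : ℤ) : ℝ) ≤ B) →
        -- the vectors f_i(λ) = (λ ω̄·l_i, k_i) are linearly independent in ℝ^{1+d}
        LinearIndependent ℝ (fun i : Fin (gm + 1) =>
          (Fin.cons (lam * ∑ p, ω p * (l i p : ℝ)) (zc (k i)) : Fin (d + 1) → ℝ)) →
        ∃ (p : {s : Finset (Fin d) // s.card = gm + 1} → ℤ)
          (mm : {s : Finset (Fin d) // s.card = gm} → Fin n → ℤ),
          (p ≠ 0 ∨ mm ≠ 0) ∧
          (∀ a i, ((|mm a i| : ℤ) : ℝ) ≤ C * B ^ (gm + 1)) ∧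
          (∀ t : ℝ, (Amat W ω l k t).det =
            (∑ a : {s : Finset (Fin d) // s.card = gm + 1},
              ((compound W (gm + 1)).mulVec (fun b => ((p b : ℤ) : ℝ)) a) ^ 2) -
            t ^ 2 * (∑ c : {s : Finset (Fin d) // s.card = gm},
              ((compound W gm).mulVec (fun a => ∑ i, ω i * ((mm a i : ℤ) : ℝ)) c) ^ 2)) ∧
          -- in particular, t ↦ det A_t is not identically zero
          ¬ (∀ t : ℝ, (Amat W ω l k t).det = 0) := by
  refine ⟨((d + 1).factorial : ℝ), by positivity, ?_⟩
  intro W hW n _ ω gm hgm l k B hB lam _ hl hk hli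
  set x : Fin (gm + 1) → ℝ := fun i => ∑ p, ω p * (l i p : ℝ) with hx
  set K : Matrix (Fin (gm + 1)) (Fin d) ℝ := Matrix.of fun i => zc (k i) with hK
  let p : {s : Finset (Fin d) // s.card = gm + 1} → ℤ := fun b =>
    ((Matrix.of k).submatrix id (b.1.orderEmbOfFin b.2)).det
  let mm : {s : Finset (Fin d) // s.card = gm} → Fin n → ℤ := fun a q =>
    (prependCol (fun i => l i q) ((Matrix.of k).submatrix id (a.1.orderEmbOfFin a.2))).det
  have hp : (fun b => (K.submatrix id (b.1.orderEmbOfFin b.2)).det) = fun b => ((p b : ℤ) : ℝ) := by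
    funext b
    rw [Int.cast_det]
    rfl
  have hm : (fun a : {s : Finset (Fin d) // s.card = gm} =>
      (prependCol x (K.submatrix id (a.1.orderEmbOfFin a.2))).det) =
      fun a => ∑ i, ω i * ((mm a i : ℤ) : ℝ) := by
    funext a
    rw [sum_mul_det_prependCol]
    rfl
  have hexp (r : ℝ) := det_smul_vecMulVec_add_gram W x K r
  rw [hp, hm] at hexp
  have hne := det_smul_vecMulVec_add_gram_ne_zero hW x K lam hli
  have hdet (t : ℝ) := hexp (-t ^ 2)
  rw [hexp] at hne
  simp only [← Amat_eq W ω l k, hx, hK] at hdet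
  refine ⟨p, mm, ?_, ?_, fun t => ?_, fun h => ?_⟩
  · by_contra! hzero
    apply hne
    simp [hzero.1, hzero.2, mulVec, dotProduct]
  · intro a q
    have hentry (i j) : |prependCol (fun i => l i q)
        ((Matrix.of k).submatrix id (a.1.orderEmbOfFin a.2)) i j| ≤ ⌊B⌋ := by
      refine Fin.cases ?_ (fun j => ?_) j
      · exact Int.le_floor.mpr (hl i q)
      · exact Int.le_floor.mpr (hk i _)
    have hbound := det_le (abv := AbsoluteValue.abs) hentry
    have hfloor : (0 : ℝ) ≤ (⌊B⌋ : ℝ) := by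
      exact_mod_cast Int.floor_nonneg.mpr (zero_le_one.trans hB)
    rw [Fintype.card_fin] at hbound
    calc ((|mm a q| : ℤ) : ℝ) ≤ (((gm + 1).factorial • ⌊B⌋ ^ (gm + 1) : ℤ) : ℝ) :=
          Int.cast_le.mpr hbound
      _ = ((gm + 1).factorial : ℝ) * (⌊B⌋ : ℝ) ^ (gm + 1) := by simp
      _ ≤ ((d + 1).factorial : ℝ) * B ^ (gm + 1) := by
          gcongr
          exact Int.floor_le B
  · rw [hdet t]
    ring
  · have hzero := (hdet 0).symm.trans (h 0)
    have hone := (hdet 1).symm.trans (h 1)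
    apply hne
    norm_num at hzero hone
    rw [hzero] at hone ⊢
    have : (∑ c, ((compound W gm *ᵥ fun a => ∑ i, ω i * ((mm a i : ℤ) : ℝ)) c) ^ 2) = 0 := by
      linarith
    rw [this]
    simp
end

section
/- The set { θ ∈ ℝ : |−(a+θ)² + b + m| ≤ ε } is contained in the union of two intervals I₁, I₂, each of length at most 2ε/√m. (This verifies Hypothesis 2 of the abstract Nash–Moser theorem for the Klein–Gordon eigenvalues D_{ℓ,j}(λ,θ) = −(λω̄·ℓ+θ)² + μ_j + m, taking a = λω̄·ℓ, b = μ_j and ε = N^{−τ₁}.) -/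
/-- The gap between `√(M - ε)` and `√(M + ε)` is at most `2 * ε / √m` whenever `0 < m ≤ M`. -/
theorem sqrt_add_sub_sqrt_sub_le {m M ε : ℝ} (hm : 0 < m) (hmM : m ≤ M) (hε : 0 ≤ ε) :
    √(M + ε) - √(M - ε) ≤ 2 * ε / √m := by
  have hgap : √(M - ε) ≤ √(M + ε) := Real.sqrt_le_sqrt (by linarith)
  have hlow : M - ε ≤ √(M - ε) ^ 2 := by
    rw [Real.sq_sqrt']
    exact le_max_left _ _
  have hupp : √(M + ε) ^ 2 = M + ε := Real.sq_sqrt (by linarith)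
  have hs : √m ≤ √(M + ε) + √(M - ε) :=
    (Real.sqrt_le_sqrt (by linarith)).trans (le_add_of_nonneg_right (Real.sqrt_nonneg _))
  rw [le_div_iff₀ (Real.sqrt_pos.2 hm)]
  calc (√(M + ε) - √(M - ε)) * √m
      ≤ (√(M + ε) - √(M - ε)) * (√(M + ε) + √(M - ε)) :=
        mul_le_mul_of_nonneg_left hs (sub_nonneg.2 hgap)
    _ = √(M + ε) ^ 2 - √(M - ε) ^ 2 := by ring
    _ ≤ 2 * ε := by linarith

theorem singular_theta_set_in_two_intervals
    (a b m ε : ℝ) (hb : 0 ≤ b) (hm : 0 < m) (hε : 0 < ε) :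
    ∃ a₁ b₁ a₂ b₂ : ℝ,
      b₁ - a₁ ≤ 2 * ε / Real.sqrt m ∧
      b₂ - a₂ ≤ 2 * ε / Real.sqrt m ∧
      {θ : ℝ | |-((a + θ) ^ 2) + b + m| ≤ ε} ⊆ Set.Icc a₁ b₁ ∪ Set.Icc a₂ b₂ := by
  have hlen := sqrt_add_sub_sqrt_sub_le hm (le_add_of_nonneg_left hb) hε.le
  refine ⟨√(b + m - ε) - a, √(b + m + ε) - a, -√(b + m + ε) - a, -√(b + m - ε) - a,
    by linarith, by linarith, fun θ hθ => ?_⟩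
  obtain ⟨h₁, h₂⟩ := abs_le.1 (Set.mem_ofPred.1 hθ)
  have hupp : |a + θ| ≤ √(b + m + ε) := Real.abs_le_sqrt (by linarith)
  have hlow : √(b + m - ε) ≤ |a + θ| := by
    rw [← Real.sqrt_sq_eq_abs]
    exact Real.sqrt_le_sqrt (by linarith)
  rcases abs_cases (a + θ) with ⟨h, -⟩ | ⟨h, -⟩ <;> rw [h] at hupp hlow
  · exact Or.inl ⟨by linarith, by linarith⟩
  · exact Or.inr ⟨by linarith, by linarith⟩
end
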